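/- Let K be a field and let A be a reduced finitely generated commutative K-algebra that is not regular, and let J = ∩{P : P ∈ Sing(A)} be the vanishing ideal of the singular locus. Then n(A, J) ≤ max over the (finitely many) strata W of Sing(A) of n(A, L_W). If in addition A is equidimensional and satisfies Serre's condition (S_2), then equality holds: n(A, J) = max over strata W of n(A, L_W). -/

import Mathlib

set_option synthInstance.maxHeartbeats 1000000
set_option maxHeartbeats 1000000

open scoped nonZeroDivisors

noncomputable section

/-- Given an intermediate ring `B` with `A ⊆ B ⊆ Q(A)` and an ideal `I` of `B`, the
endomorphism ring `End_B(I) = {x ∈ Q(A) : x·I ⊆ I}`, as a subalgebra of `Q(A)`. -/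
def endStep (A : Type*) [CommRing A] (B : Subalgebra A (FractionRing A))
    (I : Ideal B) : Subalgebra A (FractionRing A) where
  carrier := {x : FractionRing A | ∀ j ∈ I,
    x * (j : FractionRing A) ∈ (fun b : B => (b : FractionRing A)) '' I}
  mul_mem' := by
    intro x y hx hy j hj
    obtain ⟨j', hj', heq⟩ := hy j hj
    rw [mul_assoc, ← heq]
    exact hx j' hj'
  one_mem' := by
    intro j hj
    exact ⟨j, hj, (one_mul _).symm⟩
  add_mem' := by
    intro x y hx hy j hj
    obtain ⟨j1, hj1, h1⟩ := hx j hj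
    obtain ⟨j2, hj2, h2⟩ := hy j hj
    refine ⟨j1 + j2, I.add_mem hj1 hj2, ?_⟩
    push_cast
    rw [add_mul, ← h1, ← h2]
  zero_mem' := by
    intro j hj
    exact ⟨0, I.zero_mem, by push_cast; rw [zero_mul]⟩
  algebraMap_mem' := by
    intro a j hj
    refine ⟨algebraMap A B a * j, I.mul_mem_left _ hj, ?_⟩
    push_cast
    rfl

/-- The Grauert–Remmert normalization chain inside `Q(A)`:
`A_0 = A` (the image of `A` in `Q(A)`), and
`A_{i+1} = End_{A_i}(√(J·A_i))`. -/
def chainRing (A : Type*) [CommRing A] (J : Ideal A) :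
    ℕ → Subalgebra A (FractionRing A)
  | 0 => ⊥
  | n + 1 =>
      endStep A (chainRing A J n)
        ((J.map (algebraMap A (chainRing A J n))).radical)

/-- The number of steps of the Grauert–Remmert-type normalization algorithm:
the least `n` with `A_n = A_{n+1}`. -/
def nSteps (A : Type*) [CommRing A] (J : Ideal A) : ℕ :=
  sInf {n | chainRing A J n = chainRing A J (n + 1)}

/-- A Noetherian local ring is regular if its maximal ideal can be generated by
Krull-dimension-many elements. -/
def IsRegularLocal (R : Type*) [CommRing R] [IsLocalRing R] : Prop :=
  IsNoetherianRing R ∧ ∃ s : Finset R,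
    Ideal.span (s : Set R) = IsLocalRing.maximalIdeal R ∧
      (s.card : WithBot ℕ∞) = ringKrullDim R

/-- The singular locus of `A`. -/
def singLocus (A : Type*) [CommRing A] : Set (PrimeSpectrum A) :=
  {P | ¬ IsRegularLocal (Localization.AtPrime P.asIdeal)}

/-- For `P ∈ Sing(A)`, `L_P` is the intersection of all singular primes contained
in `P`. -/
def LP (A : Type*) [CommRing A] (P : PrimeSpectrum A) : Ideal A :=
  sInf {I | ∃ Q ∈ singLocus A, Q.asIdeal ≤ P.asIdeal ∧ I = Q.asIdeal}

/-- The vanishing ideal of the singular locus of `A`. -/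
def singIdeal (A : Type*) [CommRing A] : Ideal A :=
  sInf {I | ∃ P ∈ singLocus A, I = P.asIdeal}

/-- Serre's condition `(S₂)`. -/
def SerreS2 (A : Type*) [CommRing A] : Prop :=
  ∀ P : PrimeSpectrum A, ∀ n : ℕ, n ≤ 2 →
    (n : WithBot ℕ∞) ≤ ringKrullDim (Localization.AtPrime P.asIdeal) →
    ∃ rs : List (Localization.AtPrime P.asIdeal), rs.length = n ∧
      (∀ r ∈ rs, r ∈ IsLocalRing.maximalIdeal (Localization.AtPrime P.asIdeal)) ∧
      RingTheory.Sequence.IsRegular (Localization.AtPrime P.asIdeal) rs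

/-- `A` is equidimensional. -/
def Equidimensional (A : Type*) [CommRing A] : Prop :=
  (∀ P Q : Ideal A, P ∈ minimalPrimes A → Q ∈ minimalPrimes A →
      ringKrullDim (A ⧸ P) = ringKrullDim (A ⧸ Q)) ∧
    (∀ M N : PrimeSpectrum A, M.asIdeal.IsMaximal → N.asIdeal.IsMaximal →
      ringKrullDim (Localization.AtPrime M.asIdeal)
        = ringKrullDim (Localization.AtPrime N.asIdeal))

/-!
The rings `A_i` and the ideals `J_i` of the normalization chain commute with localization, so
whether the chain of `J` is stationary at step `n` can be tested at each prime `q`, where `J` may be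
replaced by any ideal with the same localization. At a singular prime `q` this ideal is `L_q`: both
are intersections of minimal primes of `J`, and `L_q` omits only those not contained in `q`. At a
regular prime `J` becomes the unit ideal. This gives the inequality.

Under (S₂), each ring of the chain is the intersection of its localizations at primes of height at
most one. As `A` is reduced, `J` has height at least one, so at such a prime `L_P` becomes either
`J` or the unit ideal, which gives equality.

For finitely generated algebras, two classical facts are needed. The normalization is finite, by
Noether normalization and a trace form argument on the separable part, with a Frobenius twist
absorbing the inseparable part. The singular locus is closed, by the Jacobian criterion over a
perfect subfield `k` of `K`; derivations over `k`, rather than over `K`, detect regularity.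
-/

/-! ### Localization of submodules -/

section LocalClosure

variable {A M : Type*} [CommRing A] [AddCommGroup M] [Module A M] {S : Submonoid A}
  {N N' : Submodule A M}

/-- The elements of `M` whose image in `S⁻¹M` lies in `S⁻¹N`. Two submodules have the same
localization at `S` iff they have the same `localClosure S`, so this compares localizations without
leaving `M`. -/
def localClosure (S : Submonoid A) (N : Submodule A M) : Submodule A M :=
  (Submodule.torsion' A (M ⧸ N) S).comap N.mkQ

theorem mem_localClosure {x : M} : x ∈ localClosure S N ↔ ∃ s ∈ S, s • x ∈ N := by
  simp only [localClosure, Submodule.mem_comap, Submodule.mkQ_apply, Submodule.mem_torsion'_iff,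
    Subtype.exists, Submonoid.mk_smul, ← Submodule.Quotient.mk_smul, Submodule.Quotient.mk_eq_zero,
    exists_prop]

theorem le_localClosure (S : Submonoid A) (N : Submodule A M) : N ≤ localClosure S N :=
  fun _ hx ↦ mem_localClosure.2 ⟨1, S.one_mem, by rwa [one_smul]⟩

theorem mem_localClosure_of_smul_mem {s : A} (hs : s ∈ S) {x : M} (hx : s • x ∈ localClosure S N) :
    x ∈ localClosure S N := by
  obtain ⟨t, ht, htx⟩ := mem_localClosure.1 hx
  exact mem_localClosure.2 ⟨t * s, S.mul_mem ht hs, by rwa [mul_smul]⟩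

theorem localClosure_le_localClosure_iff :
    localClosure S N ≤ localClosure S N' ↔ N ≤ localClosure S N' := by
  refine ⟨(le_localClosure S N).trans, fun h x hx ↦ ?_⟩
  obtain ⟨s, hs, hsx⟩ := mem_localClosure.1 hx
  exact mem_localClosure_of_smul_mem hs (h hsx)

theorem localClosure_mono (h : N ≤ N') : localClosure S N ≤ localClosure S N' :=
  localClosure_le_localClosure_iff.2 (h.trans (le_localClosure S N'))

theorem localClosure_eq_localClosure_iff :
    localClosure S N = localClosure S N' ↔ N ≤ localClosure S N' ∧ N' ≤ localClosure S N := by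
  rw [le_antisymm_iff, localClosure_le_localClosure_iff, localClosure_le_localClosure_iff]

theorem smul_le_localClosure_smul {I I' : Ideal A} (hI : I ≤ localClosure S I')
    (hN : N ≤ localClosure S N') : I • N ≤ localClosure S (I' • N') := by
  refine Submodule.smul_le.2 fun a ha x hx ↦ ?_
  obtain ⟨s, hs, hsa⟩ := mem_localClosure.1 (hI ha)
  obtain ⟨t, ht, htx⟩ := mem_localClosure.1 (hN hx)
  refine mem_localClosure.2 ⟨s * t, S.mul_mem hs ht, ?_⟩
  rw [← smul_eq_mul, smul_smul_smul_comm]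
  exact Submodule.smul_mem_smul hsa htx

theorem exists_forall_smul_mem_of_le_localClosure (hN : N.FG) (h : N ≤ localClosure S N') :
    ∃ s ∈ S, ∀ x ∈ N, s • x ∈ N' := by
  induction N, hN using Submodule.fg_induction with
  | singleton x =>
    obtain ⟨s, hs, hsx⟩ := mem_localClosure.1 (h (Submodule.mem_span_singleton_self x))
    refine ⟨s, hs, fun y hy ↦ ?_⟩
    obtain ⟨a, rfl⟩ := Submodule.mem_span_singleton.1 hy
    rw [smul_comm]
    exact N'.smul_mem a hsx
  | sup N₁ N₂ _ _ ih₁ ih₂ =>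
    obtain ⟨s₁, hs₁, h₁⟩ := ih₁ (le_sup_left.trans h)
    obtain ⟨s₂, hs₂, h₂⟩ := ih₂ (le_sup_right.trans h)
    refine ⟨s₁ * s₂, S.mul_mem hs₁ hs₂, fun y hy ↦ ?_⟩
    obtain ⟨y₁, hy₁, y₂, hy₂, rfl⟩ := Submodule.mem_sup.1 hy
    rw [smul_add, mul_smul s₁ s₂ y₂, mul_comm, mul_smul]
    exact N'.add_mem (N'.smul_mem _ (h₁ y₁ hy₁)) (N'.smul_mem _ (h₂ y₂ hy₂))

theorem iInf_localClosure_primeCompl_le (N : Submodule A M) :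
    ⨅ q : PrimeSpectrum A, localClosure q.asIdeal.primeCompl N ≤ N := by
  intro x hx
  suffices N.colon {x} = ⊤ by
    rwa [Ideal.eq_top_iff_one, Submodule.mem_colon_singleton, one_smul] at this
  by_contra hcolon
  obtain ⟨m, hm, hle⟩ := Ideal.exists_le_maximal _ hcolon
  obtain ⟨s, hs, hsx⟩ := mem_localClosure.1 ((Submodule.mem_iInf _).1 hx ⟨m, hm.isPrime⟩)
  exact hs (hle (Submodule.mem_colon_singleton.2 hsx))

theorem localClosure_primeCompl_eq_top {I q : Ideal A} [q.IsPrime] (h : ¬ I ≤ q) :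
    localClosure q.primeCompl I = ⊤ := by
  obtain ⟨s, hsI, hsq⟩ := SetLike.not_le_iff_exists.1 h
  exact eq_top_iff.2 fun a _ ↦ mem_localClosure.2 ⟨s, hsq, I.mul_mem_right a hsI⟩

theorem localClosure_inf (S : Submonoid A) (N N' : Submodule A M) :
    localClosure S (N ⊓ N') = localClosure S N ⊓ localClosure S N' := by
  refine le_antisymm (le_inf (localClosure_mono inf_le_left) (localClosure_mono inf_le_right)) ?_
  rintro x ⟨hx, hx'⟩
  obtain ⟨s, hs, hsx⟩ := mem_localClosure.1 hx
  obtain ⟨t, ht, htx⟩ := mem_localClosure.1 hx'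
  refine mem_localClosure.2 ⟨s * t, S.mul_mem hs ht, ?_, ?_⟩
  · rw [mul_comm, mul_smul]
    exact N.smul_mem t hsx
  · rw [mul_smul]
    exact N'.smul_mem s htx

theorem iInf_localClosure_le_localClosure_sInf (S : Submonoid A) {T : Set (Submodule A M)}
    (hT : T.Finite) :
    ⨅ N ∈ T, localClosure S N ≤ localClosure S (sInf T) := by
  induction T, hT using Set.Finite.induction_on with
  | empty => simpa using le_localClosure S (⊤ : Submodule A M)
  | insert _ _ ih =>
    rw [iInf_insert, sInf_insert, localClosure_inf]
    exact inf_le_inf_left _ ih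

theorem localClosure_sInf_eq_of_subset {q : Ideal A} [q.IsPrime] {T T' : Set (Ideal A)}
    (hT' : T'.Finite) (hsub : T ⊆ T') (hle : ∀ p ∈ T', p ≤ q → p ∈ T) :
    localClosure q.primeCompl (sInf T) = localClosure q.primeCompl (sInf T') := by
  refine le_antisymm (localClosure_le_localClosure_iff.2 (le_trans (le_iInf₂ fun p hp ↦ ?_)
    (iInf_localClosure_le_localClosure_sInf _ hT'))) (localClosure_mono (sInf_le_sInf hsub))
  by_cases hpq : p ≤ q
  · exact (sInf_le (hle p hp hpq)).trans (le_localClosure _ p)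
  · rw [localClosure_primeCompl_eq_top hpq]
    exact le_top

end LocalClosure

/-! ### The normalization chain -/

section Chain

variable {A : Type*} [CommRing A] {J J' : Ideal A} {B B' : Subalgebra A (FractionRing A)}

/-- The radical of the extended ideal `J·B`, as an `A`-submodule of `Q(A)`, so that for different
`B` these ideals live in the same module. -/
def radicalExtension (J : Ideal A) (B : Subalgebra A (FractionRing A)) :
    Submodule A (FractionRing A) :=
  ((J.map (algebraMap A B)).radical.restrictScalars A).map B.val.toLinearMap

/-- The operation `B ↦ End_B(√(J·B))` iterated by `chainRing`. -/
def chainStep (J : Ideal A) (B : Subalgebra A (FractionRing A)) : Subalgebra A (FractionRing A) :=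
  endStep A B (J.map (algebraMap A B)).radical

theorem chainRing_succ (J : Ideal A) (n : ℕ) :
    chainRing A J (n + 1) = chainStep J (chainRing A J n) := rfl

theorem coe_mem_smul_toSubmodule_iff {b : B} :
    (b : FractionRing A) ∈ J • Subalgebra.toSubmodule B ↔ b ∈ J.map (algebraMap A B) := by
  have hmap : J • Subalgebra.toSubmodule B =
      ((J.map (algebraMap A B)).restrictScalars A).map B.val.toLinearMap := by
    rw [← Ideal.smul_top_eq_map, Submodule.map_smul'', Submodule.map_top]
    exact congrArg (J • ·) (Submodule.range_subtype _).symm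
  rw [hmap]
  exact Function.Injective.mem_set_image Subtype.val_injective

theorem mem_radicalExtension {x : FractionRing A} :
    x ∈ radicalExtension J B ↔ x ∈ B ∧ ∃ n, x ^ (n + 1) ∈ J • Subalgebra.toSubmodule B := by
  constructor
  · rintro ⟨b, ⟨n, hn⟩, rfl⟩
    refine ⟨b.2, n, coe_mem_smul_toSubmodule_iff (b := b ^ (n + 1)) |>.2 ?_⟩
    exact pow_succ b n ▸ Ideal.mul_mem_right _ _ hn
  · rintro ⟨hx, n, hn⟩
    exact ⟨⟨x, hx⟩, ⟨n + 1, coe_mem_smul_toSubmodule_iff.1 hn⟩, rfl⟩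

theorem radicalExtension_le : radicalExtension J B ≤ Subalgebra.toSubmodule B :=
  fun _ hx ↦ (mem_radicalExtension.1 hx).1

theorem algebraMap_mem_radicalExtension {a : A} (ha : a ∈ J) :
    algebraMap A (FractionRing A) a ∈ radicalExtension J B :=
  ⟨algebraMap A B a, Ideal.le_radical (Ideal.mem_map_of_mem _ ha), rfl⟩

theorem mul_mem_radicalExtension {x y : FractionRing A} (hx : x ∈ B)
    (hy : y ∈ radicalExtension J B) : x * y ∈ radicalExtension J B := by
  obtain ⟨b, hb, rfl⟩ := hy
  exact ⟨⟨x, hx⟩ * b, Ideal.mul_mem_left _ _ hb, rfl⟩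

theorem mem_radicalExtension_of_sq_mem {x : FractionRing A} (hx : x ∈ B)
    (hx2 : x ^ 2 ∈ radicalExtension J B) : x ∈ radicalExtension J B := by
  obtain ⟨-, n, hn⟩ := mem_radicalExtension.1 hx2
  exact mem_radicalExtension.2 ⟨hx, 2 * n + 1, by rwa [← pow_mul] at hn⟩

theorem mem_chainStep {x : FractionRing A} :
    x ∈ chainStep J B ↔ ∀ y ∈ radicalExtension J B, x * y ∈ radicalExtension J B :=
  ⟨fun hx _ ⟨b, hb, hy⟩ ↦ hy ▸ hx b hb, fun hx b hb ↦ hx b ⟨b, hb, rfl⟩⟩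

theorem le_chainStep (J : Ideal A) (B : Subalgebra A (FractionRing A)) : B ≤ chainStep J B :=
  fun _ hx ↦ mem_chainStep.2 fun _ ↦ mul_mem_radicalExtension hx

theorem smul_mem_of_mem_chainStep {d : A} (hd : d ∈ J) {x : FractionRing A}
    (hx : x ∈ chainStep J B) : d • x ∈ B := by
  rw [Algebra.smul_def, mul_comm]
  exact radicalExtension_le (mem_chainStep.1 hx _ (algebraMap_mem_radicalExtension hd))

theorem chainStep_top (B : Subalgebra A (FractionRing A)) : chainStep ⊤ B = B :=
  (le_chainStep ⊤ B).antisymm' fun x hx ↦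
    one_smul A x ▸ smul_mem_of_mem_chainStep Submodule.mem_top hx

theorem chainRing_mono (J : Ideal A) : Monotone (chainRing A J) :=
  monotone_nat_of_le_succ fun _ ↦ le_chainStep J _

theorem chainRing_succ_eq_of_le {m n : ℕ} (hmn : m ≤ n)
    (hm : chainRing A J m = chainRing A J (m + 1)) :
    chainRing A J n = chainRing A J (n + 1) := by
  induction n, hmn using Nat.le_induction with
  | base => exact hm
  | succ n _ ih => rw [chainRing_succ, chainRing_succ J (n + 1), ← ih]

theorem isNoetherian_chainStep [IsNoetherian A B] (hJ : ∃ d ∈ J, d ∈ A⁰) :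
    IsNoetherian A (chainStep J B) := by
  obtain ⟨d, hdJ, hd⟩ := hJ
  let mulBy : chainStep J B →ₗ[A] B :=
    ((DistribSMul.toLinearMap A (FractionRing A) d).comp
      (chainStep J B).val.toLinearMap).codRestrict (Subalgebra.toSubmodule B)
      fun x ↦ smul_mem_of_mem_chainStep hdJ x.2
  refine isNoetherian_of_injective mulBy fun x y hxy ↦ Subtype.ext ?_
  have hdxy : d • (x : FractionRing A) = d • (y : FractionRing A) := congrArg Subtype.val hxy
  rw [Algebra.smul_def, Algebra.smul_def] at hdxy
  exact (IsLocalization.map_units (FractionRing A) (⟨d, hd⟩ : A⁰)).mul_left_cancel hdxy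

theorem isNoetherian_chainRing [IsNoetherianRing A] (hJ : ∃ d ∈ J, d ∈ A⁰) (n : ℕ) :
    IsNoetherian A (chainRing A J n) := by
  induction n with
  | zero =>
    exact isNoetherian_of_surjective
      (Algebra.ofId A (⊥ : Subalgebra A (FractionRing A))).toLinearMap
      (LinearMap.range_eq_top.2 fun ⟨_, a, ha⟩ ↦ ⟨a, Subtype.ext ha⟩)
  | succ n ih => exact isNoetherian_chainStep hJ

theorem chainRing_le_integralClosure [IsNoetherianRing A] (hJ : ∃ d ∈ J, d ∈ A⁰) (n : ℕ) :
    chainRing A J n ≤ integralClosure A (FractionRing A) := fun x hx ↦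
  have := isNoetherian_chainRing hJ n
  (IsIntegral.of_finite A (⟨x, hx⟩ : chainRing A J n)).map (chainRing A J n).val

theorem exists_chainRing_eq_succ [IsNoetherianRing A]
    [Module.Finite A (integralClosure A (FractionRing A))] (hJ : ∃ d ∈ J, d ∈ A⁰) :
    ∃ n, chainRing A J n = chainRing A J (n + 1) := by
  let normalization := Subalgebra.toSubmodule (integralClosure A (FractionRing A))
  have : IsNoetherian A normalization :=
    inferInstanceAs (IsNoetherian A (integralClosure A (FractionRing A)))
  let chain : ℕ →o Submodule A normalization :=
    ⟨fun n ↦ (Subalgebra.toSubmodule (chainRing A J n)).comap normalization.subtype,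
      fun _ _ hmn _ hx ↦ chainRing_mono J hmn hx⟩
  obtain ⟨n, hn⟩ := monotone_stabilizes_iff_noetherian.2 this chain
  refine ⟨n, (chainRing_mono J n.le_succ).antisymm fun x hx ↦ ?_⟩
  have hx' : (⟨x, chainRing_le_integralClosure hJ _ hx⟩ : normalization) ∈ chain (n + 1) := hx
  rwa [← hn _ n.le_succ] at hx'

theorem nSteps_le_iff [IsNoetherianRing A] [Module.Finite A (integralClosure A (FractionRing A))]
    (hJ : ∃ d ∈ J, d ∈ A⁰) {n : ℕ} :
    nSteps A J ≤ n ↔ chainRing A J (n + 1) ≤ chainRing A J n := by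
  refine ⟨fun hn ↦ ?_, fun hn ↦ Nat.sInf_le ((chainRing_mono J n.le_succ).antisymm hn)⟩
  have hstable : chainRing A J (nSteps A J) = chainRing A J (nSteps A J + 1) :=
    Nat.sInf_mem (s := {n | chainRing A J n = chainRing A J (n + 1)}) (exists_chainRing_eq_succ hJ)
  exact (chainRing_succ_eq_of_le hn hstable).ge

theorem nSteps_top : nSteps A (⊤ : Ideal A) = 0 :=
  Nat.sInf_eq_zero.2 (.inl (chainStep_top _).symm)

variable {S : Submonoid A}

theorem radicalExtension_le_localClosure (hJ : J ≤ localClosure S J')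
    (hB : Subalgebra.toSubmodule B ≤ localClosure S (Subalgebra.toSubmodule B')) :
    radicalExtension J B ≤ localClosure S (radicalExtension J' B') := by
  intro x hx
  obtain ⟨hxB, n, hn⟩ := mem_radicalExtension.1 hx
  obtain ⟨s, hs, hsx⟩ := mem_localClosure.1 (hB hxB)
  obtain ⟨t, ht, htx⟩ := mem_localClosure.1 (smul_le_localClosure_smul hJ hB hn)
  refine mem_localClosure.2 ⟨t * s, S.mul_mem ht hs, mem_radicalExtension.2 ⟨?_, n, ?_⟩⟩
  · rw [mul_smul]
    exact B'.smul_mem hsx t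
  · have hpow : ((t * s) • x) ^ (n + 1) = (t ^ n * s ^ (n + 1)) • t • x ^ (n + 1) := by
      rw [smul_pow, smul_smul]
      ring_nf
    exact hpow ▸ Submodule.smul_mem _ _ htx

/-- `End(√(J'·B'))` commutes with localization because `√(J'·B')` is finitely generated. -/
theorem chainStep_le_localClosure [IsNoetherian A B'] (hJ : localClosure S J = localClosure S J')
    (hB : localClosure S (Subalgebra.toSubmodule B) = localClosure S (Subalgebra.toSubmodule B')) :
    Subalgebra.toSubmodule (chainStep J B) ≤
      localClosure S (Subalgebra.toSubmodule (chainStep J' B')) := by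
  rw [localClosure_eq_localClosure_iff] at hJ hB
  intro x hx
  let mulRadical := (radicalExtension J' B').map (LinearMap.mulLeft A x)
  have hfg : mulRadical.FG := by
    have : IsNoetherian A (Subalgebra.toSubmodule B') := ‹IsNoetherian A B'›
    exact (isNoetherian_submodule.1 this _ radicalExtension_le).map _
  have hle : mulRadical ≤ localClosure S (radicalExtension J' B') := by
    rintro _ ⟨y, hy, rfl⟩
    obtain ⟨s, hs, hsy⟩ := mem_localClosure.1 (radicalExtension_le_localClosure hJ.2 hB.2 hy)
    refine mem_localClosure_of_smul_mem hs (radicalExtension_le_localClosure hJ.1 hB.1 ?_)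
    rw [LinearMap.mulLeft_apply, ← mul_smul_comm]
    exact mem_chainStep.1 hx _ hsy
  obtain ⟨s, hs, hsmul⟩ := exists_forall_smul_mem_of_le_localClosure hfg hle
  refine mem_localClosure.2 ⟨s, hs, mem_chainStep.2 fun y hy ↦ ?_⟩
  rw [smul_mul_assoc]
  exact hsmul _ ⟨y, hy, rfl⟩

theorem localClosure_chainRing_eq [IsNoetherianRing A] (hJ : ∃ d ∈ J, d ∈ A⁰)
    (hJ' : ∃ d ∈ J', d ∈ A⁰) (h : localClosure S J = localClosure S J') (n : ℕ) :
    localClosure S (Subalgebra.toSubmodule (chainRing A J n)) =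
      localClosure S (Subalgebra.toSubmodule (chainRing A J' n)) := by
  induction n with
  | zero => rfl
  | succ n ih =>
    have := isNoetherian_chainRing hJ n
    have := isNoetherian_chainRing hJ' n
    exact localClosure_eq_localClosure_iff.2
      ⟨chainStep_le_localClosure h ih, chainStep_le_localClosure h.symm ih.symm⟩

variable {ι : Type*} {T : ι → Submonoid A}

theorem iInf_localClosure_chainStep_le
    (hB : ⨅ i, localClosure (T i) (Subalgebra.toSubmodule B) ≤ Subalgebra.toSubmodule B) :
    ⨅ i, localClosure (T i) (Subalgebra.toSubmodule (chainStep J B)) ≤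
      Subalgebra.toSubmodule (chainStep J B) := by
  refine fun x hx ↦ mem_chainStep.2 fun y hy ↦ ?_
  have hpow (k : ℕ) : x ^ k * y ∈ B := by
    refine hB ((Submodule.mem_iInf _).2 fun i ↦ ?_)
    obtain ⟨s, hs, hsx⟩ := mem_localClosure.1 ((Submodule.mem_iInf _).1 hx i)
    refine mem_localClosure.2 ⟨s ^ k, pow_mem hs k, ?_⟩
    rw [← smul_mul_assoc, ← smul_pow]
    exact radicalExtension_le (mem_chainStep.1 ((chainStep J B).pow_mem hsx k) y hy)
  refine mem_radicalExtension_of_sq_mem (by simpa using hpow 1) ?_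
  rw [mul_pow, pow_two y, ← mul_assoc]
  exact mul_mem_radicalExtension (hpow 2) hy

theorem iInf_localClosure_chainRing_le
    (hA : ⨅ i, localClosure (T i) (Subalgebra.toSubmodule (⊥ : Subalgebra A (FractionRing A))) ≤
      Subalgebra.toSubmodule ⊥) (n : ℕ) :
    ⨅ i, localClosure (T i) (Subalgebra.toSubmodule (chainRing A J n)) ≤
      Subalgebra.toSubmodule (chainRing A J n) := by
  induction n with
  | zero => exact hA
  | succ n ih => exact iInf_localClosure_chainStep_le ih

theorem nSteps_le_of_forall_localClosure_eq [IsNoetherianRing A]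
    [Module.Finite A (integralClosure A (FractionRing A))]
    (hA : ⨅ i, localClosure (T i) (Subalgebra.toSubmodule (⊥ : Subalgebra A (FractionRing A))) ≤
      Subalgebra.toSubmodule ⊥)
    (hJ : ∃ d ∈ J, d ∈ A⁰) {n : ℕ}
    (hloc : ∀ i, ∃ I : Ideal A, (∃ d ∈ I, d ∈ A⁰) ∧ nSteps A I ≤ n ∧
      localClosure (T i) J = localClosure (T i) I) :
    nSteps A J ≤ n := by
  rw [nSteps_le_iff hJ, ← Subalgebra.toSubmodule.le_iff_le]
  refine le_trans (le_iInf fun i ↦ ?_) (iInf_localClosure_chainRing_le hA n)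
  obtain ⟨I, hI, hn, hJI⟩ := hloc i
  calc Subalgebra.toSubmodule (chainRing A J (n + 1))
      ≤ localClosure (T i) (Subalgebra.toSubmodule (chainRing A J (n + 1))) := le_localClosure _ _
    _ = localClosure (T i) (Subalgebra.toSubmodule (chainRing A I (n + 1))) :=
        localClosure_chainRing_eq hJ hI hJI _
    _ ≤ localClosure (T i) (Subalgebra.toSubmodule (chainRing A I n)) :=
        localClosure_mono ((nSteps_le_iff hI).1 hn)
    _ = localClosure (T i) (Subalgebra.toSubmodule (chainRing A J n)) :=
        (localClosure_chainRing_eq hJ hI hJI _).symm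

end Chain

/-! ### Finiteness of the normalization -/

section TorsionlessSubmodule

variable {B L : Type*} [CommRing B] [IsDomain B] [IsNoetherianRing B] [AddCommGroup L] [Module B L]

theorem finite_dual_of_finiteDimensional (F : Type*) [Field F] [Algebra B F] [IsFractionRing B F]
    [Module F L] [IsScalarTower B F L] [FiniteDimensional F L] (C : Submodule B L) :
    Module.Finite B (Module.Dual B C) := by
  obtain ⟨t, htC, htspan⟩ := (Submodule.fg_span_iff_fg_span_finset_subset (R := F) (C : Set L)).1
    (IsNoetherian.noetherian _)
  let evalOn : Module.Dual B C →ₗ[B] t → B :=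
    LinearMap.pi fun x ↦ Module.Dual.eval B C ⟨x, htC x.2⟩
  refine Module.Finite.of_injective evalOn ((injective_iff_map_eq_zero evalOn).2 fun ψ hψ ↦ ?_)
  have hspan : ∀ y ∈ Submodule.span B (t : Set L), ∃ hy : y ∈ C, ψ ⟨y, hy⟩ = 0 := fun y hy ↦ by
    induction hy using Submodule.span_induction with
    | mem x hx => exact ⟨htC hx, congrFun hψ ⟨x, hx⟩⟩
    | zero => exact ⟨C.zero_mem, map_zero ψ⟩
    | add x y _ _ hx hy => exact ⟨C.add_mem hx.1 hy.1, (map_add ψ ⟨x, hx.1⟩ ⟨y, hy.1⟩).trans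
        (by rw [hx.2, hy.2, add_zero])⟩
    | smul b x _ hx => exact ⟨C.smul_mem b hx.1, (map_smul ψ b ⟨x, hx.1⟩).trans
        (by rw [hx.2, smul_zero])⟩
  refine LinearMap.ext fun c ↦ ?_
  have hc : (c : L) ∈ Submodule.span F (t : Set L) := htspan ▸ Submodule.subset_span c.2
  obtain ⟨y, hy, z, hcy⟩ := (IsLocalization.mem_span_iff B⁰).1 hc
  obtain ⟨hyC, hψy⟩ := hspan y hy
  have hzc : (z : B) • c = ⟨y, hyC⟩ := Subtype.ext <| by
    rw [Submodule.coe_smul, hcy, ← algebraMap_smul F (z : B), smul_smul, mul_comm,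
      IsLocalization.mk'_spec, map_one, one_smul]
  have hzψ : (z : B) • ψ c = 0 := by rw [← map_smul, hzc, hψy]
  exact (smul_eq_zero.1 hzψ).resolve_left (nonZeroDivisors.ne_zero z.2)

theorem finite_of_injective_dualEval (F : Type*) [Field F] [Algebra B F] [IsFractionRing B F]
    [Module F L] [IsScalarTower B F L] [FiniteDimensional F L] (C : Submodule B L)
    (hC : Function.Injective (Module.Dual.eval B C)) : Module.Finite B C := by
  have := finite_dual_of_finiteDimensional F C
  obtain ⟨n, π, hπ⟩ := Module.Finite.exists_fin' B (Module.Dual B C)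
  exact Module.Finite.of_injective ((LinearMap.lcomp B B π).comp (Module.Dual.eval B C))
    ((LinearMap.lcomp_injective_of_surjective π hπ).comp hC)

end TorsionlessSubmodule

section FrobeniusTorsionless

/-- A ring of exponential characteristic `p` is Frobenius-torsionless if for each `n` the additive
maps `φ` with `φ (b ^ pⁿ * f) = b * φ f`, i.e. the linear forms on `B` regarded as a `B`-module
through the `n`-th Frobenius, separate the points of `B`. -/
def IsFrobeniusTorsionless (p : ℕ) (B : Type*) [CommRing B] : Prop :=
  ∀ (n : ℕ) (y : B), y ≠ 0 → ∃ φ : B →+ B, (∀ b f, φ (b ^ p ^ n * f) = b * φ f) ∧ φ y ≠ 0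

theorem exists_semilinear_apply_ne_zero {K M : Type*} [Field K] [CommRing M] (g : K →+* M) {y : M}
    (hy : y ≠ 0) : ∃ φ : M →+ K, (∀ b f, φ (g b * f) = b * φ f) ∧ φ y ≠ 0 := by
  let := g.toAlgebra
  contrapose! hy
  exact (Module.forall_dual_apply_eq_zero_iff K y).1 fun φ ↦ hy φ.toAddMonoidHom fun b f ↦
    φ.map_smul b f

theorem isFrobeniusTorsionless_field (p : ℕ) (K : Type*) [Field K] [ExpChar K p] :
    IsFrobeniusTorsionless p K :=
  fun n _ hy ↦ exists_semilinear_apply_ne_zero (iterateFrobenius K p n) hy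

variable {R σ : Type*} [CommRing R] {q : ℕ} {r : σ →₀ ℕ}

theorem injective_nsmul_add (hq : q ≠ 0) (r : σ →₀ ℕ) :
    Function.Injective fun m : σ →₀ ℕ ↦ q • m + r :=
  (add_left_injective r).comp (smul_right_injective _ hq)

/-- The additive map sending `∑ c_m X^m` to `∑ l (c_{q m + r}) X^m`; for `r = 0` and `l` inverse to
the `q`-th power map it takes `q`-th roots of `q`-th powers. -/
def contraction (l : R →+ R) (hq : q ≠ 0) (r : σ →₀ ℕ) : MvPolynomial σ R →+ MvPolynomial σ R :=
  AddMonoidHom.mk' (fun f ↦ AddMonoidAlgebra.ofCoeff ((Finsupp.comapDomain (q • · + r)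
      (AddMonoidAlgebra.coeff f) (injective_nsmul_add hq r).injOn).mapRange l (map_zero l)))
    fun _ _ ↦ AddMonoidAlgebra.coeff_injective (Finsupp.ext fun _ ↦ map_add l _ _)

theorem coeff_contraction (l : R →+ R) (hq : q ≠ 0) (f : MvPolynomial σ R) (m : σ →₀ ℕ) :
    (contraction l hq r f).coeff m = l (f.coeff (q • m + r)) := rfl

theorem nsmul_le_nsmul_add_iff (hr : ∀ i, r i < q) {u m : σ →₀ ℕ} : q • u ≤ q • m + r ↔ u ≤ m := by
  refine ⟨fun h i ↦ ?_, fun h ↦ (nsmul_le_nsmul_right h q).trans le_self_add⟩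
  have hi : q * u i ≤ q * m i + r i := by simpa using h i
  have hlt : q * u i < q * (m i + 1) := by linarith [hr i]
  exact Nat.lt_succ_iff.1 (lt_of_mul_lt_mul_left hlt q.zero_le)

theorem contraction_monomial_mul {l : R →+ R} (hl : ∀ c a, l (c ^ q * a) = c * l a) (hq : q ≠ 0)
    (hr : ∀ i, r i < q) (u : σ →₀ ℕ) (c : R) (f : MvPolynomial σ R) :
    contraction l hq r (MvPolynomial.monomial u c ^ q * f) =
      MvPolynomial.monomial u c * contraction l hq r f := by
  ext m
  rw [coeff_contraction, MvPolynomial.monomial_pow, MvPolynomial.coeff_monomial_mul',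
    MvPolynomial.coeff_monomial_mul', coeff_contraction]
  simp only [nsmul_le_nsmul_add_iff hr]
  split_ifs with hum
  · obtain ⟨d, rfl⟩ := le_iff_exists_add.1 hum
    rw [hl, smul_add, add_assoc, add_tsub_cancel_left, add_tsub_cancel_left]
  · exact map_zero l

theorem contraction_pow_mul {p n : ℕ} [ExpChar R p] {l : R →+ R}
    (hl : ∀ c a, l (c ^ p ^ n * a) = c * l a) (hq : p ^ n ≠ 0) (hr : ∀ i, r i < p ^ n)
    (b f : MvPolynomial σ R) :
    contraction l hq r (b ^ p ^ n * f) = b * contraction l hq r f := by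
  induction b using MvPolynomial.induction_on' with
  | monomial u c => exact contraction_monomial_mul hl hq hr u c f
  | add b₁ b₂ ih₁ ih₂ => rw [add_pow_expChar_pow, add_mul, map_add, ih₁, ih₂, add_mul]

theorem IsFrobeniusTorsionless.mvPolynomial {p : ℕ} [ExpChar R p]
    (hR : IsFrobeniusTorsionless p R) : IsFrobeniusTorsionless p (MvPolynomial σ R) := by
  intro n y hy
  obtain ⟨m, hm⟩ := MvPolynomial.ne_zero_iff.1 hy
  have hq : 0 < p ^ n := expChar_pow_pos R p n
  let quo : σ →₀ ℕ := m.mapRange (· / p ^ n) (Nat.zero_div _)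
  let rem : σ →₀ ℕ := m.mapRange (· % p ^ n) (Nat.zero_mod _)
  have hdiv : p ^ n • quo + rem = m := Finsupp.ext fun i ↦ Nat.div_add_mod (m i) (p ^ n)
  obtain ⟨l, hl, hlm⟩ := hR n _ hm
  refine ⟨contraction l hq.ne' rem, contraction_pow_mul hl hq.ne' fun i ↦ Nat.mod_lt _ hq, ?_⟩
  refine MvPolynomial.ne_zero_iff.2 ⟨quo, ?_⟩
  rwa [coeff_contraction, hdiv]

end FrobeniusTorsionless

section IntegralClosure

variable {B L : Type*} [CommRing B] [IsDomain B] [IsIntegrallyClosed B] [Field L] [Algebra B L]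

theorem exists_dual_integralClosure_ne_zero_of_isSeparable (F : Type*) [Field F] [Algebra B F]
    [IsFractionRing B F] [Algebra F L] [IsScalarTower B F L] [FiniteDimensional F L]
    [Algebra.IsSeparable F L]
    {x : integralClosure B L} (hx : x ≠ 0) : ∃ θ : integralClosure B L →ₗ[B] B, θ x ≠ 0 := by
  classical
  obtain ⟨s, b, hb⟩ := FiniteDimensional.exists_is_basis_integral B F L
  let dual := (Algebra.traceForm F L).dualBasis (traceForm_nondegenerate F L) b
  have : Module.Free B (Submodule.span B (Set.range dual)) := .of_basis (dual.restrictScalars B)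
  let incl : integralClosure B L →ₗ[B] Submodule.span B (Set.range dual) :=
    Submodule.inclusion (integralClosure_le_span_dualBasis b hb)
  contrapose! hx
  have hincl : incl x = 0 :=
    (Module.forall_dual_apply_eq_zero_iff B _).1 fun φ ↦ hx (φ.comp incl)
  exact (map_eq_zero_iff incl (Submodule.inclusion_injective _)).1 hincl

/-- A power of Frobenius maps `L` into the separable closure `E` of `F`, where the trace form
provides linear forms; `IsFrobeniusTorsionless` then undoes the Frobenius twist. -/
theorem IsFrobeniusTorsionless.finite_integralClosure [IsNoetherianRing B] (F : Type*) [Field F]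
    [Algebra B F] [IsFractionRing B F] [Algebra F L] [IsScalarTower B F L] [FiniteDimensional F L]
    {p : ℕ} [ExpChar B p] (hB : IsFrobeniusTorsionless p B) :
    Module.Finite B (integralClosure B L) := by
  let E := separableClosure F L
  have : IsScalarTower B E L := .of_algebraMap_eq fun b ↦ by
    rw [IsScalarTower.algebraMap_apply B F L, IsScalarTower.algebraMap_apply B F E,
      ← IsScalarTower.algebraMap_apply F E L]
  have : FaithfulSMul B E := .trans B F E
  have : ExpChar E p :=
    expChar_of_injective_algebraMap (FaithfulSMul.algebraMap_injective B E) p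
  let n := IsPurelyInseparable.exponent E L
  let frob : L →+* E := IsPurelyInseparable.iterateFrobenius E L p (n := n) le_rfl
  have hfrob (a : L) : algebraMap E L (frob a) = a ^ p ^ n :=
    IsPurelyInseparable.algebraMap_iterateFrobenius E p le_rfl a
  have hint (c : integralClosure B L) : IsIntegral B (frob c) := by
    rw [← isIntegral_algebraMap_iff (algebraMap E L).injective, hfrob]
    exact c.2.pow _
  let frobInt : integralClosure B L →+ integralClosure B E :=
    AddMonoidHom.mk' (fun c ↦ ⟨frob c, hint c⟩) fun c c' ↦ Subtype.ext (map_add frob c.1 c'.1)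
  have hsmul (b : B) (c) : frobInt (b • c) = b ^ p ^ n • frobInt c := by
    refine Subtype.ext ((algebraMap E L).injective ?_)
    change algebraMap E L (frob (b • (c : L))) = algebraMap E L (b ^ p ^ n • frob c)
    rw [Algebra.smul_def (b ^ p ^ n), map_mul, hfrob, hfrob, ← IsScalarTower.algebraMap_apply,
      ← Algebra.smul_def, smul_pow]
  refine finite_of_injective_dualEval F (Subalgebra.toSubmodule (integralClosure B L))
    ((injective_iff_map_eq_zero _).2 fun c hc ↦ ?_)
  by_contra hc0
  have hfrobc : frobInt c ≠ 0 := fun h ↦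
    hc0 (Subtype.ext ((map_eq_zero frob).1 (congrArg Subtype.val h)))
  obtain ⟨θ, hθ⟩ := exists_dual_integralClosure_ne_zero_of_isSeparable F hfrobc
  obtain ⟨φ, hφ, hφθ⟩ := hB n _ hθ
  let ψ : integralClosure B L →ₗ[B] B :=
    { (φ.comp θ.toAddMonoidHom).comp frobInt with
      map_smul' := fun b c ↦ by
        change φ (θ (frobInt (b • c))) = b * φ (θ (frobInt c))
        rw [hsmul, map_smul, smul_eq_mul, hφ] }
  exact hφθ (LinearMap.congr_fun hc ψ)

theorem finite_integralClosure_fractionRing_of_isDomain (K A : Type*) [Field K] [CommRing A]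
    [IsDomain A] [Algebra K A] [Algebra.FiniteType K A] :
    Module.Finite A (integralClosure A (FractionRing A)) := by
  obtain ⟨s, g, hg, hfin⟩ := exists_finite_inj_algHom_of_fg K A
  let B := MvPolynomial (Fin s) K
  let L := FractionRing A
  let : Algebra B A := g.toRingHom.toAlgebra
  have : FaithfulSMul B A := (faithfulSMul_iff_algebraMap_injective B A).2 hg
  have : Module.Finite B A := hfin
  have : FaithfulSMul B L := .trans B A L
  let : Algebra (FractionRing B) L := FractionRing.liftAlgebra B L
  have : FiniteDimensional (FractionRing B) L := by
    have : Algebra.QuasiFinite B L := .of_isLocalization (S := A) A⁰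
    have : Algebra.QuasiFinite (FractionRing B) L := .of_restrictScalars B (FractionRing B) L
    exact Module.Finite.of_quasiFinite
  have : ExpChar K (ringExpChar K) := ringExpChar.expChar K
  have : ExpChar B (ringExpChar K) :=
    expChar_of_injective_algebraMap (FaithfulSMul.algebraMap_injective K B) _
  have : Module.Finite B (integralClosure B L) :=
    (isFrobeniusTorsionless_field (ringExpChar K) K).mvPolynomial.finite_integralClosure
      (FractionRing B)
  let incl : integralClosure A L →ₗ[B] integralClosure B L :=
    Submodule.inclusion (p := (Subalgebra.toSubmodule (integralClosure A L)).restrictScalars B)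
      (p' := Subalgebra.toSubmodule (integralClosure B L)) fun x hx ↦ isIntegral_trans x hx
  have : Module.Finite B (integralClosure A L) :=
    .of_injective incl (Submodule.inclusion_injective _)
  exact .of_restrictScalars_finite B A _

end IntegralClosure

section Reduced

variable {A : Type*} [CommRing A]

/-- The projection of `Q(A)` onto its factor at a minimal prime. -/
def fractionRingToQuotient {p : Ideal A} (hp : p ∈ minimalPrimes A) :
    FractionRing A →ₐ[A] FractionRing (A ⧸ p) :=
  IsLocalization.liftAlgHom (M := A⁰) (f := Algebra.ofId A (FractionRing (A ⧸ p))) fun s ↦ by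
    have := Ideal.IsMinimalPrime.isPrime hp
    have hs : (s : A) ∉ p := fun h ↦
      Set.disjoint_left.1 (Ideal.disjoint_nonZeroDivisors_of_mem_minimalPrimes hp) h s.2
    have hs' : algebraMap (A ⧸ p) (FractionRing (A ⧸ p)) (Ideal.Quotient.mk p s) ≠ 0 := by
      rwa [Ne, FaithfulSMul.algebraMap_eq_zero_iff, Ideal.Quotient.eq_zero_iff_mem]
    exact hs'.isUnit

theorem eq_zero_of_forall_fractionRingToQuotient_eq_zero [IsReduced A] {x : FractionRing A}
    (hx : ∀ (p : Ideal A) (hp : p ∈ minimalPrimes A), fractionRingToQuotient hp x = 0) :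
    x = 0 := by
  obtain ⟨a, s, rfl⟩ := IsLocalization.exists_mk'_eq A⁰ x
  have ha : a ∈ sInf (minimalPrimes A) := Submodule.mem_sInf.2 fun p hp ↦ by
    have := Ideal.IsMinimalPrime.isPrime hp
    have h := congrArg (fractionRingToQuotient hp (algebraMap A _ s) * ·) (hx p hp)
    simp only [mul_zero, ← map_mul, IsLocalization.mk'_spec'] at h
    rwa [AlgHom.commutes, IsScalarTower.algebraMap_apply A (A ⧸ p),
      FaithfulSMul.algebraMap_eq_zero_iff, Ideal.Quotient.algebraMap_eq,
      Ideal.Quotient.eq_zero_iff_mem] at h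
  have ha0 : IsNilpotent a := by
    rwa [minimalPrimes, Ideal.sInf_minimalPrimes] at ha
  rw [ha0.eq_zero, IsLocalization.mk'_zero]

theorem finite_integralClosure_of_forall_minimalPrimes [IsReduced A] [IsNoetherianRing A]
    (h : ∀ p ∈ minimalPrimes A,
      Module.Finite (A ⧸ p) (integralClosure (A ⧸ p) (FractionRing (A ⧸ p)))) :
    Module.Finite A (integralClosure A (FractionRing A)) := by
  have : Finite (minimalPrimes A) := minimalPrimes.finite_of_isNoetherianRing A
  have (p : minimalPrimes A) :
      Module.Finite A (integralClosure (A ⧸ p.1) (FractionRing (A ⧸ p.1))) :=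
    have := h p p.2
    .trans (A ⧸ p.1) _
  let embed : integralClosure A (FractionRing A) →ₗ[A]
      ∀ p : minimalPrimes A, integralClosure (A ⧸ p.1) (FractionRing (A ⧸ p.1)) :=
    LinearMap.pi fun p ↦
      { toFun := fun x ↦ ⟨fractionRingToQuotient p.2 x, (x.2.map _).tower_top⟩
        map_add' := fun x y ↦ Subtype.ext (map_add _ x.1 y.1)
        map_smul' := fun a x ↦ Subtype.ext (map_smul _ a x.1) }
  refine .of_injective embed ((injective_iff_map_eq_zero embed).2 fun x hx ↦ Subtype.ext ?_)
  exact eq_zero_of_forall_fractionRingToQuotient_eq_zero fun p hp ↦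
    congrArg Subtype.val (congrFun hx ⟨p, hp⟩)

theorem finite_integralClosure_fractionRing (K A : Type*) [Field K] [CommRing A] [IsReduced A]
    [Algebra K A] [Algebra.FiniteType K A] :
    Module.Finite A (integralClosure A (FractionRing A)) :=
  have := Algebra.FiniteType.isNoetherianRing K A
  finite_integralClosure_of_forall_minimalPrimes fun p hp ↦
    have := Ideal.IsMinimalPrime.isPrime hp
    finite_integralClosure_fractionRing_of_isDomain K (A ⧸ p)

end Reduced

/-! ### Regular local rings -/

section RegularLocalRing

open IsLocalRing

theorem ncard_range_le_card {α ι : Type*} [Fintype ι] (f : ι → α) :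
    (Set.range f).ncard ≤ Fintype.card ι := by
  rw [← Set.image_univ, ← Nat.card_eq_fintype_card, ← Set.ncard_univ]
  exact Set.ncard_image_le

variable {R : Type*} [CommRing R] {ι : Type*} [Fintype ι] {f : ι → R}

theorem spanFinrank_span_range_le_card :
    (Ideal.span (Set.range f)).spanFinrank ≤ Fintype.card ι :=
  (Submodule.spanFinrank_span_le_ncard_of_finite (Set.finite_range f)).trans (ncard_range_le_card f)

variable [IsLocalRing R]

/-- A finite family of elements of the maximal ideal `𝔪` of a local ring whose classes in `𝔪/𝔪²`
are linearly independent over the residue field, i.e. part of a regular system of parameters when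
the ring is regular. Independence is expressed with coefficients in the ring itself; see
`isCotangentIndependent_iff_linearIndependent`. -/
def IsCotangentIndependent (f : ι → R) : Prop :=
  (∀ j, f j ∈ maximalIdeal R) ∧
    ∀ a : ι → R, ∑ j, a j * f j ∈ maximalIdeal R ^ 2 → ∀ j, a j ∈ maximalIdeal R

theorem isCotangentIndependent_iff_linearIndependent (f : ι → maximalIdeal R) :
    IsCotangentIndependent (fun j ↦ (f j : R)) ↔
      LinearIndependent (ResidueField R)
        (fun j ↦ (maximalIdeal R).toCotangent (f j) : ι → CotangentSpace R) := by
  have sum_smul_eq_zero_iff (a : ι → R) :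
      ∑ j, residue R (a j) • ((maximalIdeal R).toCotangent (f j) : CotangentSpace R) = 0 ↔
        ∑ j, a j * (f j : R) ∈ maximalIdeal R ^ 2 := by
    have hsum : ∑ j, residue R (a j) • ((maximalIdeal R).toCotangent (f j) : CotangentSpace R) =
        (maximalIdeal R).toCotangent (∑ j, a j • f j) := by
      rw [map_sum]
      exact Finset.sum_congr rfl fun j _ ↦
        (algebraMap_smul (ResidueField R) (a j) _).trans (map_smul _ _ _).symm
    rw [hsum]
    refine (Ideal.toCotangent_eq_zero _ _).trans ?_
    simp
  rw [Fintype.linearIndependent_iff, residue_surjective.comp_left.forall]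
  simp only [IsCotangentIndependent, Function.comp_apply, sum_smul_eq_zero_iff,
    residue_eq_zero_iff, SetLike.coe_mem, implies_true, true_and]

theorem span_range_eq_maximalIdeal_of_span_toCotangent [IsNoetherianRing R] {ι : Type*}
    (f : ι → maximalIdeal R)
    (h : Submodule.span (ResidueField R)
      (Set.range fun j ↦ ((maximalIdeal R).toCotangent (f j) : CotangentSpace R)) = ⊤) :
    Ideal.span (Set.range fun j ↦ (f j : R)) = maximalIdeal R := by
  have htop : Submodule.span R (Set.range f) = ⊤ :=
    CotangentSpace.span_image_eq_top_iff.1 (by rwa [← Set.range_comp])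
  have := congrArg (Submodule.map (maximalIdeal R).subtype) htop
  rwa [Submodule.map_span, Submodule.map_subtype_top, ← Set.range_comp] at this

theorem isCotangentIndependent_singleton {x : R} (hx : x ∈ maximalIdeal R)
    (hx2 : x ∉ maximalIdeal R ^ 2) : IsCotangentIndependent fun _ : Unit ↦ x := by
  refine ⟨fun _ ↦ hx, fun a ha j ↦ ?_⟩
  by_contra hunit
  rw [mem_maximalIdeal, mem_nonunits_iff, not_not] at hunit
  exact hx2 ((Ideal.unit_mul_mem_iff_mem _ hunit).1 (by simpa using ha))

namespace IsCotangentIndependent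

theorem mul_isUnit (hf : IsCotangentIndependent f) {u : ι → R} (hu : ∀ j, IsUnit (u j)) :
    IsCotangentIndependent fun j ↦ f j * u j := by
  refine ⟨fun j ↦ Ideal.mul_mem_right _ _ (hf.1 j), fun a ha j ↦ ?_⟩
  refine (Ideal.mul_unit_mem_iff_mem _ (hu j)).1 (hf.2 (fun j ↦ a j * u j) ?_ j)
  simpa only [mul_assoc, mul_comm, mul_left_comm] using ha

theorem span_range_le (hf : IsCotangentIndependent f) :
    Ideal.span (Set.range f) ≤ maximalIdeal R :=
  Ideal.span_le.2 (Set.range_subset_iff.2 hf.1)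

theorem exists_span_range_sumElim_eq [IsNoetherianRing R] (hf : IsCotangentIndependent f) :
    ∃ (s : ℕ) (g : Fin s → R), Fintype.card ι + s = (maximalIdeal R).spanFinrank ∧
      Ideal.span (Set.range (Sum.elim f g)) = maximalIdeal R := by
  have hli := (isCotangentIndependent_iff_linearIndependent fun j ↦ ⟨f j, hf.1 j⟩).1 hf
  obtain ⟨U, hU⟩ := Submodule.exists_isCompl (Submodule.span (ResidueField R)
    (Set.range fun j ↦ ((maximalIdeal R).toCotangent ⟨f j, hf.1 j⟩ : CotangentSpace R)))
  let b := Module.finBasis (ResidueField R) U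
  choose g hg using fun j ↦ (maximalIdeal R).toCotangent_surjective (b j : CotangentSpace R)
  refine ⟨Module.finrank (ResidueField R) U, fun j ↦ (g j : R), ?_, ?_⟩
  · rw [spanFinrank_maximalIdeal_eq_finrank_cotangentSpace, ← finrank_span_eq_card hli]
    exact Submodule.finrank_add_eq_of_isCompl hU
  have hgU : Submodule.span (ResidueField R)
      (Set.range fun j ↦ ((maximalIdeal R).toCotangent (g j) : CotangentSpace R)) = U := by
    have := congrArg (Submodule.map U.subtype) b.span_eq
    rw [Submodule.map_span, ← Set.range_comp, Submodule.map_subtype_top] at this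
    simp only [hg]
    exact this
  refine Eq.trans ?_ (span_range_eq_maximalIdeal_of_span_toCotangent
    (Sum.elim (fun j ↦ ⟨f j, hf.1 j⟩) g) ?_)
  · congr 2
    ext (j | j) <;> rfl
  · refine Eq.trans ?_ ((congrArg _ hgU).trans hU.sup_eq_top)
    rw [← Submodule.span_union, ← Set.Sum.elim_range]
    congr 2
    ext (j | j) <;> rfl

end IsCotangentIndependent

theorem nontrivial_quotient_of_le_maximalIdeal {𝔞 : Ideal R} (h : 𝔞 ≤ maximalIdeal R) :
    Nontrivial (R ⧸ 𝔞) :=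
  Ideal.Quotient.nontrivial_iff.2 (ne_top_of_le_ne_top (maximalIdeal.isMaximal R).ne_top h)

instance isLocalRing_quotient (𝔞 : Ideal R) [Nontrivial (R ⧸ 𝔞)] : IsLocalRing (R ⧸ 𝔞) :=
  .of_surjective' (Ideal.Quotient.mk 𝔞) Ideal.Quotient.mk_surjective

theorem IsCotangentIndependent.card_add_spanFinrank_quotient_le [IsNoetherianRing R]
    (hf : IsCotangentIndependent f) [Nontrivial (R ⧸ Ideal.span (Set.range f))] :
    Fintype.card ι + (maximalIdeal (R ⧸ Ideal.span (Set.range f))).spanFinrank ≤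
      (maximalIdeal R).spanFinrank := by
  obtain ⟨s, g, hs, hspan⟩ := hf.exists_span_range_sumElim_eq
  set 𝔞 := Ideal.span (Set.range f)
  have hmax : maximalIdeal (R ⧸ 𝔞) = Ideal.span (Set.range (Ideal.Quotient.mk 𝔞 ∘ g)) := by
    rw [← map_maximalIdeal_of_surjective _ Ideal.Quotient.mk_surjective, ← hspan,
      Set.Sum.elim_range, Ideal.span_union, Ideal.map_sup, Ideal.map_quotient_self, bot_sup_eq,
      Ideal.map_span, Set.range_comp]
  rw [← hs, hmax]
  simpa using spanFinrank_span_range_le_card (f := Ideal.Quotient.mk 𝔞 ∘ g)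

theorem spanFinrank_maximalIdeal_le_card_add [IsNoetherianRing R] {𝔞 : Ideal R}
    [Nontrivial (R ⧸ 𝔞)] (hf : ∀ j, f j ∈ maximalIdeal R)
    (h𝔞 : 𝔞 ≤ Ideal.span (Set.range f) ⊔ maximalIdeal R ^ 2) :
    (maximalIdeal R).spanFinrank ≤ Fintype.card ι + (maximalIdeal (R ⧸ 𝔞)).spanFinrank := by
  classical
  obtain ⟨G, hGcard, hG⟩ := Submodule.FG.exists_span_finset_card_eq_spanFinrank
    (IsNoetherian.noetherian (maximalIdeal (R ⧸ 𝔞)))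
  obtain ⟨lift, hlift⟩ := (Ideal.Quotient.mk_surjective (I := 𝔞)).hasRightInverse
  let N := Ideal.span (Set.range f ∪ lift '' G)
  have map_le := (map_maximalIdeal_of_surjective _ (Ideal.Quotient.mk_surjective (I := 𝔞))).le
  have hmapN : (Ideal.span (lift '' G)).map (Ideal.Quotient.mk 𝔞) = maximalIdeal (R ⧸ 𝔞) := by
    rw [Ideal.map_span, ← Set.image_comp, hlift.id, Set.image_id]
    exact hG
  have hmN : maximalIdeal R ≤ N ⊔ maximalIdeal R ^ 2 :=
    calc maximalIdeal R ≤ Ideal.span (lift '' G) ⊔ 𝔞 := by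
          rwa [← hmapN, Ideal.map_le_iff_le_comap,
            Ideal.comap_map_of_surjective _ Ideal.Quotient.mk_surjective,
            ← RingHom.ker_eq_comap_bot, Ideal.mk_ker] at map_le
      _ ≤ N ⊔ maximalIdeal R ^ 2 := by
          refine sup_le (le_sup_of_le_left (Ideal.span_mono Set.subset_union_right)) ?_
          exact h𝔞.trans (sup_le_sup_right (Ideal.span_mono Set.subset_union_left) _)
  have hNm : N ≤ maximalIdeal R := by
    refine Ideal.span_le.2 (Set.union_subset (Set.range_subset_iff.2 hf) ?_)
    rw [← Ideal.span_le]
    refine le_maximalIdeal fun htop ↦ ?_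
    rw [htop, Ideal.map_top] at hmapN
    exact (maximalIdeal.isMaximal (R ⧸ 𝔞)).ne_top hmapN.symm
  have hN : N = maximalIdeal R := hNm.antisymm <|
    Submodule.le_of_le_smul_of_le_jacobson_bot (IsNoetherian.noetherian _)
      (maximalIdeal_le_jacobson _) (by rwa [smul_eq_mul, ← sq])
  rw [← hN, ← hGcard]
  calc N.spanFinrank ≤ (Set.range f ∪ lift '' G).ncard :=
        Submodule.spanFinrank_span_le_ncard_of_finite (Set.toFinite _)
    _ ≤ (Set.range f).ncard + (lift '' G).ncard := Set.ncard_union_le _ _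
    _ ≤ Fintype.card ι + G.card :=
        add_le_add (ncard_range_le_card f)
          ((Set.ncard_image_le G.finite_toSet).trans (Set.ncard_coe_finset G).le)

theorem IsCotangentIndependent.isRegularLocalRing_quotient {R : Type*} [CommRing R]
    [IsRegularLocalRing R] {f : ι → R} (hf : IsCotangentIndependent f) :
    IsRegularLocalRing (R ⧸ Ideal.span (Set.range f)) ∧
      ringKrullDim (R ⧸ Ideal.span (Set.range f)) + Fintype.card ι = ringKrullDim R := by
  have := nontrivial_quotient_of_le_maximalIdeal hf.span_range_le
  set 𝔞 := Ideal.span (Set.range f)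
  have dim_le : ringKrullDim R ≤ ringKrullDim (R ⧸ 𝔞) + Fintype.card ι := by
    refine (ringKrullDim_le_ringKrullDim_quotient_add_spanFinrank 𝔞 ?_).trans ?_
    · rw [ringJacobson_eq_maximalIdeal]
      exact hf.span_range_le
    · gcongr
      exact spanFinrank_span_range_le_card
  have le_dim : ((maximalIdeal (R ⧸ 𝔞)).spanFinrank : WithBot ℕ∞) + Fintype.card ι ≤
      ringKrullDim R := by
    rw [← IsRegularLocalRing.spanFinrank_maximalIdeal, add_comm]
    exact_mod_cast hf.card_add_spanFinrank_quotient_le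
  refine ⟨.of_spanFinrank_maximalIdeal_le _
    (ENat.WithBot.add_le_add_natCast_right_iff.1 (le_dim.trans dim_le)), dim_le.antisymm' ?_⟩
  exact (add_le_add_left (ringKrullDim_le_spanFinrank_maximalIdeal (R ⧸ 𝔞)) _).trans le_dim

/-- Prime avoidance, which tolerates the single non-prime ideal `𝔪²`. -/
theorem exists_mem_maximalIdeal_notMem_sq_notMem_minimalPrimes [IsNoetherianRing R]
    (hdim : ringKrullDim R ≠ 0) :
    ∃ x ∈ maximalIdeal R, x ∉ maximalIdeal R ^ 2 ∧ ∀ p ∈ minimalPrimes R, x ∉ p := by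
  by_contra! hcon
  have hsub : (maximalIdeal R : Set R) ⊆
      ⋃ p ∈ insert (maximalIdeal R ^ 2) (minimalPrimes R), (p : Set R) := by
    intro x hx
    by_cases hx2 : x ∈ maximalIdeal R ^ 2
    · exact Set.mem_biUnion (Set.mem_insert _ _) hx2
    · obtain ⟨p, hp, hxp⟩ := hcon x hx hx2
      exact Set.mem_biUnion (Set.mem_insert_of_mem _ hp) hxp
  have maximalIdeal_notMem : maximalIdeal R ∉ minimalPrimes R := by
    intro hmin
    apply hdim
    rw [← maximalIdeal_height_eq_ringKrullDim, Ideal.height_eq_zero_iff.2 hmin]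
    rfl
  obtain ⟨p, rfl | hp, hle⟩ := (Ideal.subset_union_prime_finite (f := id)
    ((minimalPrimes.finite_of_isNoetherianRing R).insert _) (maximalIdeal R ^ 2)
    (maximalIdeal R ^ 2) fun p hp hne _ ↦ (hp.resolve_left hne).isPrime).1 hsub
  · have hbot : maximalIdeal R = ⊥ :=
      Submodule.eq_bot_of_le_smul_of_le_jacobson_bot (maximalIdeal R) _
        (IsNoetherian.noetherian _) (by rwa [smul_eq_mul, ← sq]) (maximalIdeal_le_jacobson _)
    exact hdim (ringKrullDim_eq_zero_of_isField (isField_iff_maximalIdeal_eq.2 hbot))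
  · have := hp.isPrime
    have hpm : p = maximalIdeal R := (le_maximalIdeal this.ne_top).antisymm hle
    exact maximalIdeal_notMem (hpm ▸ hp)

/-- The minimal prime `p` below `(x)` satisfies `p = x p`, hence vanishes by Nakayama. -/
theorem isDomain_of_isPrime_span_singleton [IsNoetherianRing R] {x : R}
    (hx : x ∈ maximalIdeal R) (hprime : (Ideal.span {x}).IsPrime)
    (hmin : ∀ p ∈ minimalPrimes R, x ∉ p) : IsDomain R := by
  obtain ⟨p, hp, hpx⟩ := Ideal.exists_minimalPrimes_le (bot_le : ⊥ ≤ Ideal.span {x})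
  have hpp : p.IsPrime := hp.isPrime
  have hle : p ≤ maximalIdeal R • p := by
    intro y hy
    obtain ⟨z, rfl⟩ := Ideal.mem_span_singleton'.1 (hpx hy)
    rw [mul_comm]
    exact Ideal.mul_mem_mul hx ((hpp.mem_or_mem hy).resolve_right (hmin p hp))
  have hbot : p = ⊥ := Submodule.eq_bot_of_le_smul_of_le_jacobson_bot (maximalIdeal R) _
    (IsNoetherian.noetherian _) hle (maximalIdeal_le_jacobson _)
  have : (⊥ : Ideal R).IsPrime := hbot ▸ hpp
  exact .of_bot_isPrime R

theorem isDomain_of_isRegularLocalRing (R : Type*) [CommRing R] [IsRegularLocalRing R] :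
    IsDomain R := by
  induction hn : (maximalIdeal R).spanFinrank generalizing R with
  | zero =>
    have hbot := (Submodule.spanFinrank_eq_zero_iff_eq_bot (IsNoetherian.noetherian _)).1 hn
    exact (isField_iff_maximalIdeal_eq.2 hbot).isDomain
  | succ n ih =>
    have hdim : ringKrullDim R = (n : WithBot ℕ∞) + 1 := by
      rw [← IsRegularLocalRing.spanFinrank_maximalIdeal, hn]
      rfl
    obtain ⟨x, hx, hx2, hmin⟩ := exists_mem_maximalIdeal_notMem_sq_notMem_minimalPrimes
      (R := R) (by rw [hdim]; norm_cast)
    obtain ⟨hreg, hdimq⟩ := (isCotangentIndependent_singleton hx hx2).isRegularLocalRing_quotient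
    rw [Set.range_const] at hreg hdimq
    rw [hdim, Fintype.card_unit, Nat.cast_one, ENat.WithBot.add_one_cancel,
      ← IsRegularLocalRing.spanFinrank_maximalIdeal] at hdimq
    have hdom := ih (R ⧸ Ideal.span {x}) (by exact_mod_cast hdimq)
    exact isDomain_of_isPrime_span_singleton hx
      ((Ideal.Quotient.isDomain_iff_prime _).1 hdom) hmin

theorem exists_isCotangentIndependent_le_span_sup_sq [IsNoetherianRing R] {𝔞 : Ideal R}
    (h𝔞 : 𝔞 ≤ maximalIdeal R) :
    ∃ (r : ℕ) (f : Fin r → R), IsCotangentIndependent f ∧ (∀ j, f j ∈ 𝔞) ∧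
      𝔞 ≤ Ideal.span (Set.range f) ⊔ maximalIdeal R ^ 2 := by
  obtain ⟨b, hbS, hb, hli⟩ := exists_linearIndependent (ResidueField R)
    ((maximalIdeal R).toCotangent '' {x | (x : R) ∈ 𝔞} : Set (CotangentSpace R))
  have : Finite b := hli.finite
  obtain ⟨r, ⟨e⟩⟩ := Finite.exists_equiv_fin b
  choose f hf𝔞 hfe using fun j : Fin r ↦ hbS (e.symm j).2
  have hrange : (maximalIdeal R).toCotangent '' Set.range f = b := by
    rw [← Set.range_comp]
    refine (congrArg Set.range (funext hfe)).trans ?_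
    exact (e.symm.surjective.range_comp _).trans Subtype.range_coe
  refine ⟨r, fun j ↦ (f j : R), ?_, hf𝔞, fun a ha ↦ ?_⟩
  · rw [isCotangentIndependent_iff_linearIndependent]
    simp only [hfe]
    exact hli.comp e.symm e.symm.injective
  have hmem : (maximalIdeal R).toCotangent ⟨a, h𝔞 ha⟩ ∈
      (Submodule.span R (Set.range f)).map (maximalIdeal R).toCotangent := by
    rw [Submodule.map_span, hrange,
      ← Submodule.restrictScalars_span R (ResidueField R) residue_surjective, hb]
    exact Submodule.subset_span ⟨⟨a, h𝔞 ha⟩, ha, rfl⟩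
  obtain ⟨c, hc, hca⟩ := hmem
  have hcspan : (c : R) ∈ Ideal.span (Set.range fun j ↦ (f j : R)) := by
    have := Submodule.mem_map_of_mem (f := (maximalIdeal R).subtype) hc
    rwa [Submodule.map_span, ← Set.range_comp] at this
  rw [← sub_sub_cancel (c : R) a]
  exact sub_mem (Ideal.mem_sup_left hcspan)
    (Ideal.mem_sup_right ((Ideal.toCotangent_eq _).1 hca))

theorem exists_isCotangentIndependent_span_eq {R : Type*} [CommRing R] [IsRegularLocalRing R]
    (𝔞 : Ideal R) [IsRegularLocalRing (R ⧸ 𝔞)] :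
    ∃ (r : ℕ) (f : Fin r → R), IsCotangentIndependent f ∧ Ideal.span (Set.range f) = 𝔞 := by
  obtain ⟨r, f, hf, hf𝔞, h𝔞⟩ := exists_isCotangentIndependent_le_span_sup_sq
    (le_maximalIdeal (Ideal.Quotient.nontrivial_iff.1 (inferInstance : Nontrivial (R ⧸ 𝔞))))
  have hle : Ideal.span (Set.range f) ≤ 𝔞 := Ideal.span_le.2 (Set.range_subset_iff.2 hf𝔞)
  obtain ⟨_, hdim⟩ := hf.isRegularLocalRing_quotient
  refine ⟨r, f, hf, hle.antisymm fun a ha ↦ ?_⟩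
  by_contra haf
  have := isDomain_of_isRegularLocalRing (R ⧸ Ideal.span (Set.range f))
  -- A nonzero kernel of `R ⧸ (f) → R ⧸ 𝔞` would make the dimension of `R ⧸ 𝔞` too small.
  have hlt : ringKrullDim (R ⧸ 𝔞) + 1 ≤ ringKrullDim (R ⧸ Ideal.span (Set.range f)) :=
    ringKrullDim_succ_le_of_surjective (Ideal.Quotient.factor hle)
      (Ideal.Quotient.factor_surjective hle) (r := Ideal.Quotient.mk _ a)
      (mem_nonZeroDivisors_of_ne_zero fun h ↦ haf (Ideal.Quotient.eq_zero_iff_mem.1 h))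
      (by rwa [Ideal.Quotient.factor_mk, Ideal.Quotient.eq_zero_iff_mem])
  have hge := spanFinrank_maximalIdeal_le_card_add hf.1 h𝔞
  rw [← IsRegularLocalRing.spanFinrank_maximalIdeal,
    ← IsRegularLocalRing.spanFinrank_maximalIdeal] at hlt hdim
  norm_cast at hlt hdim
  omega

end RegularLocalRing

/-! ### Formal smoothness over a perfect field -/

section FieldExtension

open MvPolynomial KaehlerDifferential TensorProduct

theorem one_tmul_D_eq_zero_iff {k L σ : Type*} [CommRing k] [CommRing L]
    [Algebra (MvPolynomial σ k) L] (x : MvPolynomial σ k) :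
    (1 : L) ⊗ₜ[MvPolynomial σ k] D k (MvPolynomial σ k) x = 0 ↔
      ∀ i, algebraMap (MvPolynomial σ k) L (pderiv i x) = 0 := by
  let b := (mvPolynomialBasis k σ).baseChange L
  have repr_apply (i : σ) : b.repr (1 ⊗ₜ D k (MvPolynomial σ k) x) i =
      algebraMap (MvPolynomial σ k) L (pderiv i x) := by
    simp [b, Module.Basis.baseChange_repr_tmul, Algebra.smul_def, mvPolynomialBasis_repr_apply]
  rw [← b.repr.map_eq_zero_iff, Finsupp.ext_iff]
  simp only [repr_apply, Finsupp.zero_apply]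

theorem formallySmooth_iff_forall_mem_ker_sq (k L : Type*) [CommRing k] [Field L] [Algebra k L] :
    Algebra.FormallySmooth k L ↔
      ∀ x ∈ RingHom.ker (aeval (id : L → L) : MvPolynomial L k →ₐ[k] L),
        (∀ i, aeval (id : L → L) (pderiv i x) = 0) →
        x ∈ RingHom.ker (aeval (id : L → L) : MvPolynomial L k →ₐ[k] L) ^ 2 := by
  let : Algebra (MvPolynomial L k) L := (aeval (id : L → L)).toAlgebra
  have : IsScalarTower k (MvPolynomial L k) L :=
    IsScalarTower.of_algebraMap_eq fun x ↦ ((aeval (id : L → L)).commutes x).symm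
  have hsurj : Function.Surjective (algebraMap (MvPolynomial L k) L) :=
    fun y ↦ ⟨X y, aeval_X id y⟩
  rw [Algebra.formallySmooth_iff, and_iff_right (inferInstanceAs (Module.Projective L Ω[L⁄k])),
    ← Algebra.FormallySmooth.kerCotangentToTensor_injective_iff hsurj, injective_iff_map_eq_zero,
    (Ideal.toCotangent_surjective _).forall, Subtype.forall]
  simp only [kerCotangentToTensor_toCotangent, one_tmul_D_eq_zero_iff, Ideal.toCotangent_eq_zero]
  rfl

variable {k L : Type*} [Field k] [Field L] [Algebra k L]

theorem aeval_id_rename_val (F : IntermediateField k L) (x : MvPolynomial F k) :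
    aeval (id : L → L) (rename Subtype.val x) = (aeval (id : F → F) x : F) := by
  rw [aeval_rename, Function.id_comp, ← F.coe_val, ← comp_aeval_apply]
  rfl

theorem exists_intermediateField_rename_eq (x : MvPolynomial L k) :
    ∃ F : IntermediateField k L, Algebra.EssFiniteType k F ∧
      ∃ y : MvPolynomial F k, rename Subtype.val y = x := by
  refine ⟨.adjoin k x.vars, IntermediateField.essFiniteType_iff.2 ⟨x.vars, rfl⟩,
    exists_rename_eq_of_vars_subset_range x _ Subtype.val_injective fun v hv ↦ ?_⟩
  exact ⟨⟨v, IntermediateField.subset_adjoin k _ hv⟩, rfl⟩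

/-- Mathlib covers finitely generated extensions; the criterion
`formallySmooth_iff_forall_mem_ker_sq` involves finitely many elements at a time. -/
theorem formallySmooth_of_perfectField (k L : Type*) [Field k] [PerfectField k] [Field L]
    [Algebra k L] : Algebra.FormallySmooth k L := by
  rw [formallySmooth_iff_forall_mem_ker_sq]
  intro x hx hdx
  obtain ⟨F, _, y, rfl⟩ := exists_intermediateField_rename_eq x
  have hy : y ∈ RingHom.ker (aeval (id : F → F) : MvPolynomial F k →ₐ[k] F) := by
    rwa [RingHom.mem_ker, ← ZeroMemClass.coe_eq_zero, ← aeval_id_rename_val]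
  have hdy (i : F) : aeval (id : F → F) (pderiv i y) = 0 := by
    rw [← ZeroMemClass.coe_eq_zero, ← aeval_id_rename_val, ← pderiv_rename Subtype.val_injective]
    exact hdx i
  have hy_sq := (formallySmooth_iff_forall_mem_ker_sq k F).1 inferInstance y hy hdy
  have hx_sq := Ideal.mem_map_of_mem (rename Subtype.val : MvPolynomial F k →ₐ[k] _) hy_sq
  rw [Ideal.map_pow] at hx_sq
  refine Ideal.pow_right_mono (Ideal.map_le_iff_le_comap.2 fun z hz ↦ ?_) 2 hx_sq
  rw [RingHom.mem_ker] at hz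
  rw [Ideal.mem_comap, RingHom.mem_ker]
  exact (aeval_id_rename_val F z).trans (by rw [hz, ZeroMemClass.coe_zero])

theorem exists_perfectField_algebra (K : Type*) [Field K] :
    ∃ (k : Type) (_ : Field k) (_ : PerfectField k), Nonempty (Algebra k K) := by
  obtain ⟨p, _⟩ := CharP.exists K
  rcases CharP.char_is_prime_or_zero K p with hp | rfl
  · have : Fact p.Prime := ⟨hp⟩
    exact ⟨ZMod p, inferInstance, inferInstance, ⟨ZMod.algebra K p⟩⟩
  · have : CharZero K := CharP.charP_to_charZero K
    exact ⟨ℚ, inferInstance, inferInstance, ⟨inferInstance⟩⟩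

end FieldExtension

/-! ### The Jacobian criterion -/

section Jacobian

open KaehlerDifferential TensorProduct IsLocalRing

section LinearAlgebra

variable {κ : Type*} [Field κ] {ι : Type*} [Fintype ι] [DecidableEq ι]

theorem exists_det_ne_zero_of_span_eq_top {S : Set (ι → κ)} (hS : Submodule.span κ S = ⊤) :
    ∃ w : ι → ι → κ, (∀ i, w i ∈ S) ∧ (Matrix.of w).det ≠ 0 := by
  obtain ⟨w, hw, -, hli⟩ := Submodule.exists_fun_fin_finrank_span_eq κ S
  have hcard : Fintype.card ι = Module.finrank κ (Submodule.span κ S) := by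
    rw [hS, finrank_top, Module.finrank_fintype_fun_eq_card]
  let e := Fintype.equivFinOfCardEq hcard
  refine ⟨w ∘ e, fun i ↦ hw _, IsUnit.ne_zero ?_⟩
  rw [← Matrix.isUnit_iff_isUnit_det, ← Matrix.linearIndependent_rows_iff_isUnit]
  exact hli.comp e e.injective

theorem exists_det_dual_ne_zero {V : Type*} [AddCommGroup V] [Module κ V] {v : ι → V}
    (hv : LinearIndependent κ v) {Φ : Set (Module.Dual κ V)}
    (hΦ : ∀ x, (∀ φ ∈ Φ, φ x = 0) → x = 0) :
    ∃ φ : ι → Module.Dual κ V, (∀ i, φ i ∈ Φ) ∧ (Matrix.of fun i j ↦ φ i (v j)).det ≠ 0 := by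
  have hspan : Submodule.span κ ((fun (φ : Module.Dual κ V) j ↦ φ (v j)) '' Φ) = ⊤ := by
    by_contra hne
    obtain ⟨f, hf_ne, hf⟩ := Submodule.exists_le_ker_of_lt_top _ (lt_top_iff_ne_top.2 hne)
    have hf_apply (w : ι → κ) : f w = ∑ j, w j * f (Pi.single j 1) := by
      conv_lhs => rw [pi_eq_sum_univ' w]
      simp
    refine hf_ne (LinearMap.pi_ext' fun j ↦ LinearMap.ext_ring ?_)
    simp only [LinearMap.comp_apply, LinearMap.single_apply, LinearMap.zero_apply]
    refine Fintype.linearIndependent_iff.1 hv (fun j ↦ f (Pi.single j 1)) (hΦ _ fun φ hφ ↦ ?_) j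
    have : f (fun j ↦ φ (v j)) = 0 := hf (Submodule.subset_span ⟨φ, hφ, rfl⟩)
    rw [hf_apply] at this
    simpa [mul_comm] using this
  obtain ⟨w, hw, hdet⟩ := exists_det_ne_zero_of_span_eq_top hspan
  choose φ hφ hφw using hw
  obtain rfl : (fun i j ↦ φ i (v j)) = w := funext hφw
  exact ⟨φ, hφ, hdet⟩

end LinearAlgebra

section Projective

variable {P M : Type*} [CommRing P] [AddCommGroup M] [Module P M] [Module.Projective P M]

theorem eq_zero_of_forall_liftBaseChange_dual_eq_zero {S : Type*} [CommRing S] [Algebra P S]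
    {x : S ⊗[P] M}
    (hx : ∀ l : Module.Dual P M, (Algebra.linearMap P S ∘ₗ l).liftBaseChange S x = 0) : x = 0 := by
  classical
  obtain ⟨s, hs⟩ := Module.projective_def'.1 ‹Module.Projective P M›
  have hinj : Function.Injective (s.baseChange S) := by
    refine Function.LeftInverse.injective
      (g := (Finsupp.linearCombination P (id : M → M)).baseChange S) fun y ↦ ?_
    rw [← LinearMap.comp_apply, ← LinearMap.baseChange_comp, hs, LinearMap.baseChange_id,
      LinearMap.id_apply]
  refine (map_eq_zero_iff _ hinj).1 ((LinearEquiv.map_eq_zero_iff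
    (TensorProduct.finsuppScalarRight P S S M)).1 (Finsupp.ext fun b ↦ ?_))
  have hcoord : (Algebra.linearMap P S ∘ₗ Finsupp.lapply b ∘ₗ s).liftBaseChange S =
      Finsupp.lapply b ∘ₗ (TensorProduct.finsuppScalarRight P S S M).toLinearMap ∘ₗ
        s.baseChange S := by
    ext m
    simp [Algebra.smul_def]
  exact (LinearMap.congr_fun hcoord x).symm.trans (hx _)

theorem exists_det_algebraMap_dual_ne_zero {κ ι : Type*} [Field κ] [Algebra P κ] [Fintype ι]
    [DecidableEq ι] {v : ι → M} (hv : LinearIndependent κ fun j ↦ (1 : κ) ⊗ₜ[P] v j) :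
    ∃ l : ι → Module.Dual P M, (Matrix.of fun i j ↦ algebraMap P κ (l i (v j))).det ≠ 0 := by
  obtain ⟨φ, hφ, hdet⟩ := exists_det_dual_ne_zero hv
    (Φ := Set.range fun l : Module.Dual P M ↦ (Algebra.linearMap P κ ∘ₗ l).liftBaseChange κ)
    fun x hx ↦ eq_zero_of_forall_liftBaseChange_dual_eq_zero (Set.forall_mem_range.1 hx)
  choose l hl using hφ
  refine ⟨l, ?_⟩
  simpa [← hl] using hdet

end Projective

section Derivation

variable {k P R ι : Type*} [CommRing k] [CommRing P] [CommRing R] [Algebra k P] [Algebra k R]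

theorem exists_derivation_algebraMap_eq [Algebra P R] [IsScalarTower k P R]
    [Algebra.FormallyEtale P R] (d : Derivation k P P) :
    ∃ d' : Derivation k R R, ∀ x, d' (algebraMap P R x) = algebraMap P R (d x) := by
  refine ⟨((Algebra.linearMap P R ∘ₗ d.liftKaehlerDifferential).liftBaseChange R ∘ₗ
    (tensorKaehlerEquivOfFormallyEtale k P R).symm.toLinearMap).compDer (D k R), fun x ↦ ?_⟩
  simp [tensorKaehlerEquivOfFormallyEtale_symm_D_algebraMap]

theorem derivation_mem_of_mem_sq (d : Derivation k R R) {I : Ideal R} {x : R} (hx : x ∈ I ^ 2) :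
    d x ∈ I := by
  rw [pow_two] at hx
  induction hx using Submodule.mul_induction_on' with
  | mem_mul_mem a ha b hb =>
    rw [d.leibniz]
    exact I.add_mem (I.mul_mem_right _ ha) (I.mul_mem_right _ hb)
  | add a _ b _ ha hb =>
    rw [map_add]
    exact I.add_mem ha hb

variable [IsLocalRing R] [Fintype ι] [DecidableEq ι]

theorem isCotangentIndependent_of_isUnit_det {f : ι → R} (hf : ∀ j, f j ∈ maximalIdeal R)
    (d : ι → Derivation k R R) (hdet : IsUnit (Matrix.of fun i j ↦ d i (f j)).det) :
    IsCotangentIndependent f := by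
  refine ⟨hf, fun a ha ↦ ?_⟩
  have sum_mem (i : ι) : ∑ j, d i (f j) * a j ∈ maximalIdeal R := by
    have hsplit : ∑ j, d i (f j) * a j = d i (∑ j, a j * f j) - ∑ j, d i (a j) * f j := by
      simp only [map_sum, Derivation.leibniz, smul_eq_mul, ← Finset.sum_sub_distrib]
      exact Finset.sum_congr rfl fun j _ ↦ by ring
    rw [hsplit]
    exact sub_mem (derivation_mem_of_mem_sq (d i) ha)
      (sum_mem fun j _ ↦ Ideal.mul_mem_left _ _ (hf j))
  have hres_det : ((Matrix.of fun i j ↦ d i (f j)).map (residue R)).det ≠ 0 := by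
    rw [← RingHom.mapMatrix_apply, ← RingHom.map_det]
    exact (hdet.map (residue R)).ne_zero
  have hres : residue R ∘ a = 0 := by
    refine Matrix.eq_zero_of_mulVec_eq_zero hres_det (funext fun i ↦ ?_)
    rw [← RingHom.map_mulVec]
    exact (residue_eq_zero_iff _).2 (sum_mem i)
  exact fun j ↦ (residue_eq_zero_iff _).1 (congrFun hres j)

end Derivation

theorem IsCotangentIndependent.linearIndependent_one_tmul_D (k : Type*) {R ι : Type*} [Field k]
    [PerfectField k] [CommRing R] [IsLocalRing R] [Algebra k R] [Algebra.FormallySmooth k R]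
    [Fintype ι] {f : ι → R} (hf : IsCotangentIndependent f) :
    LinearIndependent (ResidueField R) fun j ↦ (1 : ResidueField R) ⊗ₜ[R] D k R (f j) := by
  have := formallySmooth_of_perfectField k (ResidueField R)
  have hinj := (Algebra.FormallySmooth.kerCotangentToTensor_injective_iff (R := k)
    (residue_surjective (R := R))).2 inferInstance
  rw [Fintype.linearIndependent_iff]
  intro c hc
  obtain ⟨a, rfl⟩ := residue_surjective.comp_left c
  have hker (j : ι) : f j ∈ RingHom.ker (algebraMap R (ResidueField R)) :=
    ker_residue (R := R) ▸ hf.1 j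
  let y : RingHom.ker (algebraMap R (ResidueField R)) := ∑ j, a j • ⟨f j, hker j⟩
  have hy_val : (y : R) = ∑ j, a j * f j := by
    simp only [y, AddSubmonoidClass.coe_finsetSum, Submodule.coe_smul, smul_eq_mul]
  have hy : kerCotangentToTensor k R (ResidueField R) (Ideal.toCotangent _ y) = 0 := by
    simp only [y, map_sum, map_smul, kerCotangentToTensor_toCotangent]
    simpa only [Function.comp_apply, ← ResidueField.algebraMap_eq, algebraMap_smul] using hc
  rw [map_eq_zero_iff _ hinj, Ideal.toCotangent_eq_zero, hy_val, ResidueField.algebraMap_eq,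
    ker_residue] at hy
  exact fun j ↦ (residue_eq_zero_iff _).2 (hf.2 a hy j)

theorem isCotangentIndependent_iff_exists_derivation (k : Type*) {P ι : Type*} [Field k]
    [PerfectField k] [CommRing P] [Algebra k P] [Algebra.FormallySmooth k P] {Q : Ideal P}
    [Q.IsPrime] [Fintype ι] [DecidableEq ι] {f : ι → P} (hf : ∀ j, f j ∈ Q) :
    IsCotangentIndependent (fun j ↦ algebraMap P (Localization.AtPrime Q) (f j)) ↔
      ∃ d : ι → Derivation k P P, (Matrix.of fun i j ↦ d i (f j)).det ∉ Q := by
  let R := Localization.AtPrime Q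
  have : Algebra.FormallyEtale P R := Algebra.FormallyEtale.of_isLocalization Q.primeCompl
  constructor
  · intro hind
    have : Algebra.FormallySmooth k R := Algebra.FormallySmooth.comp k P R
    let toLocal : ResidueField R ⊗[P] Ω[P⁄k] →ₗ[ResidueField R] ResidueField R ⊗[R] Ω[R⁄k] :=
      ((TensorProduct.mk R (ResidueField R) Ω[R⁄k] 1).restrictScalars P ∘ₗ
        KaehlerDifferential.map k k P R).liftBaseChange (ResidueField R)
    have hv : LinearIndependent (ResidueField R) fun j ↦ (1 : ResidueField R) ⊗ₜ[P] D k P (f j) :=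
      .of_comp toLocal (by simpa [Function.comp_def, toLocal] using
        hind.linearIndependent_one_tmul_D k)
    obtain ⟨l, hl⟩ := exists_det_algebraMap_dual_ne_zero hv
    refine ⟨fun i ↦ (l i).compDer (D k P), fun hmem ↦ hl ?_⟩
    rw [← IsLocalization.AtPrime.to_map_mem_maximal_iff R Q, ← residue_eq_zero_iff,
      ← ResidueField.algebraMap_eq, ← IsScalarTower.algebraMap_apply P R (ResidueField R),
      RingHom.map_det] at hmem
    exact hmem
  · rintro ⟨d, hd⟩
    choose d' hd' using fun i ↦ exists_derivation_algebraMap_eq (R := R) (d i)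
    refine isCotangentIndependent_of_isUnit_det (k := k)
      (fun j ↦ (IsLocalization.AtPrime.to_map_mem_maximal_iff R Q _).2 (hf j)) d' ?_
    have hdet := IsLocalization.map_units R (⟨_, hd⟩ : Q.primeCompl)
    rw [RingHom.map_det] at hdet
    convert hdet using 2
    ext i j
    exact hd' i (f j)

end Jacobian

/-! ### Openness of the regular locus -/

section RegularLocus

open IsLocalRing

theorem map_algebraMap_le_map_iff {P S : Type*} [CommRing P] [CommRing S] [Algebra P S]
    (M : Submonoid P) [IsLocalization M S] {I N : Ideal P} :
    I.map (algebraMap P S) ≤ N.map (algebraMap P S) ↔ I ≤ localClosure M N := by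
  rw [Ideal.map_le_iff_le_comap]
  refine forall₂_congr fun x _ ↦ ?_
  rw [Ideal.mem_comap, IsLocalization.algebraMap_mem_map_algebraMap_iff M, mem_localClosure]
  rfl

theorem map_span_range {R S ι : Type*} [CommRing R] [CommRing S] (g : R →+* S) (f : ι → R) :
    (Ideal.span (Set.range f)).map g = Ideal.span (Set.range fun j ↦ g (f j)) := by
  rw [Ideal.map_span, ← Set.range_comp, Function.comp_def]

theorem span_range_mul_isUnit {R ι : Type*} [CommRing R] (f : ι → R) {u : ι → R}
    (hu : ∀ j, IsUnit (u j)) :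
    Ideal.span (Set.range fun j ↦ f j * u j) = Ideal.span (Set.range f) := by
  refine le_antisymm (Ideal.span_le.2 ?_) (Ideal.span_le.2 ?_) <;> rintro _ ⟨j, rfl⟩
  · exact Ideal.mul_mem_right _ _ (Ideal.subset_span ⟨j, rfl⟩)
  · exact (Ideal.mul_unit_mem_iff_mem _ (hu j)).1 (Ideal.subset_span ⟨j, rfl⟩)

section

variable {P : Type*} [CommRing P] [IsRegularRing P] {I Q : Ideal P} [Q.IsPrime]

theorem exists_isCotangentIndependent_map_eq
    [IsRegularLocalRing (Localization.AtPrime Q ⧸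
      I.map (algebraMap P (Localization.AtPrime Q)))] :
    ∃ (r : ℕ) (f : Fin r → P), (∀ j, f j ∈ I) ∧
      IsCotangentIndependent (fun j ↦ algebraMap P (Localization.AtPrime Q) (f j)) ∧
      (Ideal.span (Set.range f)).map (algebraMap P (Localization.AtPrime Q)) =
        I.map (algebraMap P (Localization.AtPrime Q)) := by
  obtain ⟨r, g, hg, hspan⟩ :=
    exists_isCotangentIndependent_span_eq (I.map (algebraMap P (Localization.AtPrime Q)))
  have clear_denominator (j : Fin r) : ∃ x : I × Q.primeCompl,
      g j * algebraMap P (Localization.AtPrime Q) x.2 = algebraMap P _ x.1 :=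
    (IsLocalization.mem_map_algebraMap_iff Q.primeCompl _).1
      (hspan ▸ Ideal.subset_span ⟨j, rfl⟩)
  choose x hx using clear_denominator
  have hunit (j : Fin r) : IsUnit (algebraMap P (Localization.AtPrime Q) (x j).2) :=
    IsLocalization.map_units _ _
  refine ⟨r, fun j ↦ (x j).1, fun j ↦ (x j).1.2, ?_, ?_⟩
  · simpa only [hx] using hg.mul_isUnit hunit
  · rw [map_span_range, ← hspan, ← span_range_mul_isUnit g hunit]
    simp only [hx]

theorem isRegularLocalRing_quotient_iff_exists_derivation (k : Type*) [Field k] [PerfectField k]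
    [Algebra k P] [Algebra.FormallySmooth k P] (hIQ : I ≤ Q) :
    IsRegularLocalRing (Localization.AtPrime Q ⧸
        I.map (algebraMap P (Localization.AtPrime Q))) ↔
      ∃ (r : ℕ) (f : Fin r → P) (d : Fin r → Derivation k P P) (t : P),
        (∀ j, f j ∈ I) ∧ (∀ x ∈ I, t * x ∈ Ideal.span (Set.range f)) ∧
          t * (Matrix.of fun i j ↦ d i (f j)).det ∉ Q := by
  constructor
  · intro _
    obtain ⟨r, f, hfI, hind, hmap⟩ := exists_isCotangentIndependent_map_eq (I := I) (Q := Q)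
    obtain ⟨d, hd⟩ :=
      (isCotangentIndependent_iff_exists_derivation k fun j ↦ hIQ (hfI j)).1 hind
    obtain ⟨t, ht, htI⟩ := exists_forall_smul_mem_of_le_localClosure (IsNoetherian.noetherian I)
      ((map_algebraMap_le_map_iff Q.primeCompl).1 hmap.ge)
    exact ⟨r, f, d, t, hfI, htI, Q.primeCompl.mul_mem ht hd⟩
  · rintro ⟨r, f, d, t, hfI, htI, hdet⟩
    have hind := (isCotangentIndependent_iff_exists_derivation k fun j ↦ hIQ (hfI j)).2
      ⟨d, fun h ↦ hdet (Q.mul_mem_left _ h)⟩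
    have hmap : (Ideal.span (Set.range f)).map (algebraMap P (Localization.AtPrime Q)) =
        I.map (algebraMap P (Localization.AtPrime Q)) := by
      refine le_antisymm (Ideal.map_mono (Ideal.span_le.2 (Set.range_subset_iff.2 hfI)))
        ((map_algebraMap_le_map_iff Q.primeCompl).2 fun x hx ↦ mem_localClosure.2 ?_)
      exact ⟨t, fun h ↦ hdet (Q.mul_mem_right _ h), htI x hx⟩
    rw [← hmap, map_span_range]
    exact hind.isRegularLocalRing_quotient.1

end

theorem nonempty_localization_quotient_ker_equiv {P A : Type*} [CommRing P] [CommRing A]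
    {φ : P →+* A} (hφ : Function.Surjective φ) (Q : Ideal A) [Q.IsPrime] :
    Nonempty (Localization.AtPrime (Q.comap φ) ⧸
      (RingHom.ker φ).map (algebraMap P (Localization.AtPrime (Q.comap φ))) ≃+*
        Localization.AtPrime Q) := by
  have hcompl : (Q.comap φ).primeCompl.map φ = Q.primeCompl := by
    ext x
    obtain ⟨y, rfl⟩ := hφ x
    exact ⟨fun ⟨_, hz, hzy⟩ ↦ hzy ▸ hz, fun hy ↦ ⟨y, hy, rfl⟩⟩
  have hker : RingHom.ker (Localization.localRingHom (Q.comap φ) Q φ rfl) =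
      (RingHom.ker φ).map (algebraMap P _) :=
    IsLocalization.ker_map (M := (Q.comap φ).primeCompl) (T := Q.primeCompl)
      (Localization.AtPrime Q) φ hcompl
  rw [← hker]
  exact ⟨RingHom.quotientKerEquivOfSurjective
    (RingHom.surjectiveOnStalks_of_surjective hφ Q ‹_›)⟩

theorem isOpen_setOf_isRegularLocalRing_of_surjective (k : Type*) {P A : Type*} [Field k]
    [PerfectField k] [CommRing P] [IsRegularRing P] [Algebra k P] [Algebra.FormallySmooth k P]
    [CommRing A] {φ : P →+* A} (hφ : Function.Surjective φ) :
    IsOpen {Q : PrimeSpectrum A | IsRegularLocalRing (Localization.AtPrime Q.asIdeal)} := by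
  have regular_iff (Q : PrimeSpectrum A) : IsRegularLocalRing (Localization.AtPrime Q.asIdeal) ↔
      ∃ (r : ℕ) (f : Fin r → P) (d : Fin r → Derivation k P P) (t : P),
        (∀ j, f j ∈ RingHom.ker φ) ∧ (∀ x ∈ RingHom.ker φ, t * x ∈ Ideal.span (Set.range f)) ∧
          t * (Matrix.of fun i j ↦ d i (f j)).det ∉ Q.asIdeal.comap φ := by
    obtain ⟨e⟩ := nonempty_localization_quotient_ker_equiv hφ Q.asIdeal
    rw [← isRegularLocalRing_quotient_iff_exists_derivation k
      (Ideal.ker_le_comap φ)]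
    exact ⟨fun _ ↦ .of_ringEquiv e.symm, fun _ ↦ .of_ringEquiv e⟩
  refine isOpen_iff_forall_mem_open.2 fun Q hQ ↦ ?_
  obtain ⟨r, f, d, t, hf, ht, hdet⟩ := (regular_iff Q).1 hQ
  exact ⟨_, fun Q' hQ' ↦ (regular_iff Q').2 ⟨r, f, d, t, hf, ht, hQ'⟩,
    (PrimeSpectrum.basicOpen (φ _)).isOpen, hdet⟩

theorem isOpen_setOf_isRegularLocalRing (K A : Type*) [Field K] [CommRing A] [Algebra K A]
    [Algebra.FiniteType K A] :
    IsOpen {Q : PrimeSpectrum A | IsRegularLocalRing (Localization.AtPrime Q.asIdeal)} := by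
  obtain ⟨n, φ, hφ⟩ := Algebra.FiniteType.iff_quotient_mvPolynomial''.1
    ‹Algebra.FiniteType K A›
  obtain ⟨k, _, _, ⟨_⟩⟩ := exists_perfectField_algebra K
  have : Algebra.FormallySmooth k K := formallySmooth_of_perfectField k K
  have : Algebra.FormallySmooth k (MvPolynomial (Fin n) K) := .comp k K _
  exact isOpen_setOf_isRegularLocalRing_of_surjective k (φ := φ.toRingHom) hφ

theorem isRegularLocal_iff_isRegularLocalRing {R : Type*} [CommRing R] [IsLocalRing R]
    [IsNoetherianRing R] : IsRegularLocal R ↔ IsRegularLocalRing R := by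
  constructor
  · rintro ⟨-, s, hs, hcard⟩
    apply IsRegularLocalRing.of_spanFinrank_maximalIdeal_le
    rw [← hcard, ← hs, ← Set.ncard_coe_finset]
    exact_mod_cast Submodule.spanFinrank_span_le_ncard_of_finite (R := R) s.finite_toSet
  · intro h
    have hfg : (maximalIdeal R).FG := IsNoetherian.noetherian _
    have hfin := Submodule.FG.finite_generators hfg
    refine ⟨inferInstance, hfin.toFinset, ?_, ?_⟩
    · rw [hfin.coe_toFinset]
      exact Submodule.span_generators _
    · rw [← h.spanFinrank_maximalIdeal, ← Submodule.FG.generators_ncard hfg,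
        Set.ncard_eq_toFinset_card _ hfin]

theorem isClosed_singLocus (K A : Type*) [Field K] [CommRing A] [Algebra K A]
    [Algebra.FiniteType K A] : IsClosed (singLocus A) := by
  have : IsNoetherianRing A := Algebra.FiniteType.isNoetherianRing K A
  rw [← isOpen_compl_iff]
  convert isOpen_setOf_isRegularLocalRing K A using 1
  ext Q
  rw [Set.mem_compl_iff, singLocus, Set.mem_ofPred_eq, not_not, Set.mem_ofPred_eq,
    isRegularLocal_iff_isRegularLocalRing]

end RegularLocus

/-! ### Serre's condition (S₂) in codimension one -/

section SerreS2

variable {A : Type*} [CommRing A]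

theorem mem_span_singleton_of_isRegular_pair {r₁ r₂ b c : A}
    (hr : RingTheory.Sequence.IsRegular A [r₁, r₂]) (hb : b ∈ A⁰)
    (h₁ : r₁ * c ∈ Ideal.span {b}) (h₂ : r₂ * c ∈ Ideal.span {b}) : c ∈ Ideal.span {b} := by
  obtain ⟨hr₁, hr⟩ := (RingTheory.Sequence.isRegular_cons_iff _ _ _).1 hr
  obtain ⟨hr₂, -⟩ := (RingTheory.Sequence.isRegular_cons_iff _ _ _).1 hr
  obtain ⟨u, hu⟩ := Ideal.mem_span_singleton'.1 h₁
  obtain ⟨v, hv⟩ := Ideal.mem_span_singleton'.1 h₂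
  have hvu : r₁ * v = r₂ * u := by
    refine sub_eq_zero.1 ((mul_right_mem_nonZeroDivisors_eq_zero_iff hb).1 ?_)
    linear_combination r₁ * hv - r₂ * hu
  have hu0 : (Submodule.Quotient.mk u : QuotSMulTop r₁ A) = 0 := by
    refine hr₂.right_eq_zero_of_smul ?_
    rw [← Submodule.Quotient.mk_smul, Submodule.Quotient.mk_eq_zero, smul_eq_mul, ← hvu]
    exact Submodule.smul_mem_pointwise_smul v r₁ ⊤ trivial
  obtain ⟨w, -, rfl : r₁ * w = u⟩ := (Submodule.Quotient.mk_eq_zero _).1 hu0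
  refine Ideal.mem_span_singleton'.2 ⟨w, hr₁ ?_⟩
  simp only [smul_eq_mul]
  rw [← hu, mul_assoc]

theorem mem_colon_bot_mk_iff {I : Ideal A} {a y : A} :
    y ∈ (⊥ : Submodule A (A ⧸ I)).colon {Ideal.Quotient.mk I a} ↔ y * a ∈ I := by
  rw [Submodule.mem_colon_singleton, Submodule.mem_bot, ← Ideal.Quotient.eq_zero_iff_mem]
  rfl

theorem SerreS2.height_le_one [IsNoetherianRing A] (hA : SerreS2 A) {b : A} (hb : b ∈ A⁰)
    {P : Ideal A} (hP : IsAssociatedPrime P (A ⧸ Ideal.span {b})) : P.height ≤ 1 := by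
  obtain ⟨hprime, c', hc⟩ := isAssociatedPrime_iff.1 hP
  obtain ⟨c, rfl⟩ := Ideal.Quotient.mk_surjective c'
  by_contra! hheight
  let f := algebraMap A (Localization.AtPrime P)
  have hdim : ((2 : ℕ) : WithBot ℕ∞) ≤ ringKrullDim (Localization.AtPrime P) := by
    rw [IsLocalization.AtPrime.ringKrullDim_eq_height P]
    exact WithBot.coe_le_coe.2 (by simpa [one_add_one_eq_two] using Order.add_one_le_of_lt hheight)
  obtain ⟨rs, hlen, hmem, hreg⟩ := hA ⟨P, hprime⟩ 2 le_rfl hdim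
  obtain ⟨r₁, r₂, rfl⟩ := List.length_eq_two.1 hlen
  have hmax : IsLocalRing.maximalIdeal (Localization.AtPrime P) ≤
      (Ideal.span {f b}).colon {f c} := by
    rw [← Localization.AtPrime.map_eq_maximalIdeal, Ideal.map_le_iff_le_comap]
    intro y hy
    rw [hc, mem_colon_bot_mk_iff] at hy
    rw [Ideal.mem_comap, Submodule.mem_colon_singleton, smul_eq_mul, ← map_mul,
      ← Set.image_singleton (f := f), ← Ideal.map_span]
    exact Ideal.mem_map_of_mem f hy
  have mul_mem {r} (hr : r ∈ [r₁, r₂]) : r * f c ∈ Ideal.span {f b} :=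
    Submodule.mem_colon_singleton.1 (hmax (hmem r hr))
  have hfb : f b ∈ (Localization.AtPrime P)⁰ :=
    IsLocalization.map_nonZeroDivisors_le P.primeCompl _ (Submonoid.mem_map_of_mem _ hb)
  have hfc : f c ∈ Ideal.span {f b} :=
    mem_span_singleton_of_isRegular_pair hreg hfb (mul_mem (by simp)) (mul_mem (by simp))
  rw [← Set.image_singleton (f := f), ← Ideal.map_span,
    IsLocalization.algebraMap_mem_map_algebraMap_iff P.primeCompl] at hfc
  obtain ⟨s, hs, hsc⟩ := hfc
  exact hs (hc ▸ mem_colon_bot_mk_iff.2 hsc)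

theorem SerreS2.iInf_localClosure_bot_le [IsNoetherianRing A] (hA : SerreS2 A) :
    ⨅ q : {q : PrimeSpectrum A // q.asIdeal.height ≤ 1}, localClosure q.1.asIdeal.primeCompl
      (Subalgebra.toSubmodule (⊥ : Subalgebra A (FractionRing A))) ≤ Subalgebra.toSubmodule ⊥ := by
  intro x hx
  obtain ⟨a, b, rfl⟩ := IsLocalization.exists_mk'_eq A⁰ x
  have smul_mem_iff (s : A) : s • IsLocalization.mk' (FractionRing A) a b ∈
      (⊥ : Subalgebra A (FractionRing A)) ↔ s * a ∈ Ideal.span {(b : A)} := by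
    rw [Algebra.mem_bot, Ideal.mem_span_singleton']
    refine exists_congr fun z ↦ ?_
    rw [Algebra.smul_def, IsLocalization.mul_mk'_eq_mk'_of_mul, eq_comm,
      IsLocalization.mk'_eq_iff_eq_mul, ← map_mul, eq_comm,
      (IsFractionRing.injective A (FractionRing A)).eq_iff]
  suffices a ∈ Ideal.span {(b : A)} by
    simpa using (smul_mem_iff 1).2 (by rwa [one_mul])
  by_contra ha
  obtain ⟨P, hP, hle⟩ := exists_le_isAssociatedPrime_of_isNoetherianRing A
    (Ideal.Quotient.mk (Ideal.span {(b : A)}) a) (mt Ideal.Quotient.eq_zero_iff_mem.1 ha)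
  obtain ⟨s, hs, hsx⟩ := mem_localClosure.1
    ((Submodule.mem_iInf _).1 hx ⟨⟨P, hP.1⟩, hA.height_le_one b.2 hP⟩)
  exact hs (hle (mem_colon_bot_mk_iff.2 ((smul_mem_iff s).1 hsx)))

end SerreS2

/-! ### Strata of the singular locus -/

section Strata

variable {A : Type*} [CommRing A]

theorem exists_mem_nonZeroDivisors_of_forall_not_le [IsReduced A] [IsNoetherianRing A]
    {J : Ideal A} (hJ : ∀ p ∈ minimalPrimes A, ¬ J ≤ p) : ∃ d ∈ J, d ∈ A⁰ := by
  have hcover : ¬ (J : Set A) ⊆ ⋃ p ∈ minimalPrimes A, (id p : Ideal A) := by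
    rw [Ideal.subset_union_prime_finite (f := id) (minimalPrimes.finite_of_isNoetherianRing A) 0 0
      fun p hp _ _ ↦ hp.isPrime]
    push Not
    exact hJ
  obtain ⟨d, hd, hdp⟩ := Set.not_subset.1 hcover
  refine ⟨d, hd, mem_nonZeroDivisors_iff_right.2 fun x hx ↦ ?_⟩
  have hx' : x ∈ sInf (minimalPrimes A) := Submodule.mem_sInf.2 fun (p : Ideal A) hp ↦
    have : p.IsPrime := hp.isPrime
    (Ideal.IsPrime.mem_or_mem this (hx ▸ p.zero_mem)).resolve_right
      fun hdp' ↦ hdp (Set.mem_biUnion hp hdp')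
  have hradical : (⊥ : Ideal A).radical = ⊥ := nilradical_eq_zero A
  rwa [minimalPrimes, Ideal.sInf_minimalPrimes, hradical] at hx'

theorem eq_of_le_of_height_le_one {p q : Ideal A} [p.IsPrime] [q.IsPrime]
    (hp : p ∉ minimalPrimes A) (hpq : p ≤ q) (hq : q.height ≤ 1) : p = q := by
  by_contra hne
  have hlt := (Ideal.height_add_one_le_of_lt_of_isPrime (lt_of_le_of_ne hpq hne)).trans hq
  refine hp (Ideal.height_eq_zero_iff.1 (nonpos_iff_eq_zero.1 ?_))
  exact (ENat.add_le_add_iff_right ENat.one_ne_top).1 (by rwa [zero_add])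

theorem notMem_singLocus_of_mem_minimalPrimes [IsReduced A] [IsNoetherianRing A]
    {P : PrimeSpectrum A} (hP : P.asIdeal ∈ minimalPrimes A) : P ∉ singLocus A := by
  rw [singLocus, Set.mem_ofPred_eq, not_not]
  have hdim : ringKrullDim (Localization.AtPrime P.asIdeal) = 0 := by
    rw [IsLocalization.AtPrime.ringKrullDim_eq_height P.asIdeal, Ideal.height_eq_zero_iff.2 hP]
    rfl
  have : Ring.KrullDimLE 0 (Localization.AtPrime P.asIdeal) := by
    rw [Ring.krullDimLE_iff, hdim]
    rfl
  refine ⟨inferInstance, ∅, ?_, by rw [hdim]; rfl⟩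
  rw [IsLocalRing.isField_iff_maximalIdeal_eq.1 Ring.KrullDimLE.isField_of_isReduced,
    Finset.coe_empty, Ideal.span_empty]

theorem singIdeal_eq_vanishingIdeal : singIdeal A = PrimeSpectrum.vanishingIdeal (singLocus A) := by
  rw [singIdeal, PrimeSpectrum.vanishingIdeal, ← sInf_image]
  congr 1
  ext I
  simp [eq_comm]

theorem mem_singLocus_iff (hA : IsClosed (singLocus A)) {P : PrimeSpectrum A} :
    P ∈ singLocus A ↔ singIdeal A ≤ P.asIdeal := by
  rw [singIdeal_eq_vanishingIdeal, ← SetLike.coe_subset_coe, ← PrimeSpectrum.mem_zeroLocus,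
    PrimeSpectrum.zeroLocus_vanishingIdeal_eq_closure, hA.closure_eq]

theorem sInf_minimalPrimes_singIdeal : sInf (singIdeal A).minimalPrimes = singIdeal A := by
  rw [Ideal.sInf_minimalPrimes, singIdeal_eq_vanishingIdeal,
    (PrimeSpectrum.isRadical_vanishingIdeal _).radical]

theorem singIdeal_le_LP (P : PrimeSpectrum A) : singIdeal A ≤ LP A P :=
  sInf_le_sInf fun _ ⟨Q, hQ, _, hI⟩ ↦ ⟨Q, hQ, hI⟩

theorem LP_eq_sInf_minimalPrimes (hA : IsClosed (singLocus A)) (P : PrimeSpectrum A) :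
    LP A P = sInf {p ∈ (singIdeal A).minimalPrimes | p ≤ P.asIdeal} := by
  apply le_antisymm
  · refine le_sInf fun p ⟨hp, hpP⟩ ↦ sInf_le ⟨⟨p, hp.isPrime⟩, ?_, hpP, rfl⟩
    exact (mem_singLocus_iff hA).2 hp.1.2
  · refine le_sInf ?_
    rintro _ ⟨Q, hQ, hQP, rfl⟩
    obtain ⟨p, hp, hpQ⟩ := Ideal.exists_minimalPrimes_le ((mem_singLocus_iff hA).1 hQ)
    have hmem : p ∈ {p ∈ (singIdeal A).minimalPrimes | p ≤ P.asIdeal} := ⟨hp, hpQ.trans hQP⟩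
    exact (sInf_le hmem).trans hpQ

theorem finite_setOf_nSteps_LP [IsNoetherianRing A] (hA : IsClosed (singLocus A)) :
    {m : ℕ | ∃ P ∈ singLocus A, m = nSteps A (LP A P)}.Finite := by
  have hfin := (Ideal.finite_minimalPrimes_of_isNoetherianRing A (singIdeal A)).finite_subsets
  refine (hfin.image fun T ↦ nSteps A (sInf T)).subset ?_
  rintro m ⟨P, -, rfl⟩
  exact ⟨_, Set.sep_subset _ _, by rw [LP_eq_sInf_minimalPrimes hA]⟩

theorem localClosure_singIdeal_eq_LP [IsNoetherianRing A] (hA : IsClosed (singLocus A))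
    {q : Ideal A} [q.IsPrime] {P : PrimeSpectrum A}
    (hq : ∀ p ∈ (singIdeal A).minimalPrimes, p ≤ q → p ≤ P.asIdeal) :
    localClosure q.primeCompl (singIdeal A) = localClosure q.primeCompl (LP A P) := by
  rw [LP_eq_sInf_minimalPrimes hA, localClosure_sInf_eq_of_subset
    (Ideal.finite_minimalPrimes_of_isNoetherianRing A (singIdeal A)) (Set.sep_subset _ _)
    fun p hp hpq ↦ ⟨hp, hq p hp hpq⟩, sInf_minimalPrimes_singIdeal]

theorem exists_mem_minimalPrimes_singIdeal_of_LP_le [IsNoetherianRing A]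
    (hA : IsClosed (singLocus A)) {P : PrimeSpectrum A} {q : Ideal A} [q.IsPrime]
    (hq : LP A P ≤ q) : ∃ p ∈ (singIdeal A).minimalPrimes, p ≤ P.asIdeal ∧ p ≤ q := by
  have hfin : {p ∈ (singIdeal A).minimalPrimes | p ≤ P.asIdeal}.Finite :=
    (Ideal.finite_minimalPrimes_of_isNoetherianRing A (singIdeal A)).subset (Set.sep_subset _ _)
  rw [LP_eq_sInf_minimalPrimes hA, ← hfin.coe_toFinset, ← Finset.inf_id_eq_sInf,
    Ideal.IsPrime.inf_le' ‹_›] at hq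
  obtain ⟨p, hp, hpq⟩ := hq
  obtain ⟨hpJ, hpP⟩ := hfin.mem_toFinset.1 hp
  exact ⟨p, hpJ, hpP, hpq⟩

theorem not_singIdeal_le_of_mem_minimalPrimes [IsReduced A] [IsNoetherianRing A]
    (hA : IsClosed (singLocus A)) {p : Ideal A} (hp : p ∈ minimalPrimes A) :
    ¬ singIdeal A ≤ p :=
  fun h ↦ notMem_singLocus_of_mem_minimalPrimes (P := ⟨p, hp.isPrime⟩) hp
    ((mem_singLocus_iff hA).2 h)

theorem exists_mem_singIdeal_mem_nonZeroDivisors [IsReduced A] [IsNoetherianRing A]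
    (hA : IsClosed (singLocus A)) : ∃ d ∈ singIdeal A, d ∈ A⁰ :=
  exists_mem_nonZeroDivisors_of_forall_not_le fun _ ↦ not_singIdeal_le_of_mem_minimalPrimes hA

variable [IsReduced A] [IsNoetherianRing A] [Module.Finite A (integralClosure A (FractionRing A))]

theorem nSteps_singIdeal_le (hA : IsClosed (singLocus A)) {n : ℕ}
    (hn : ∀ P ∈ singLocus A, nSteps A (LP A P) ≤ n) : nSteps A (singIdeal A) ≤ n := by
  obtain ⟨d, hd, hd0⟩ := exists_mem_singIdeal_mem_nonZeroDivisors hA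
  refine nSteps_le_of_forall_localClosure_eq (iInf_localClosure_primeCompl_le _) ⟨d, hd, hd0⟩
    fun q ↦ ?_
  by_cases hq : q ∈ singLocus A
  · exact ⟨LP A q, ⟨d, singIdeal_le_LP q hd, hd0⟩, hn q hq,
      localClosure_singIdeal_eq_LP hA fun _ _ ↦ id⟩
  · rw [mem_singLocus_iff hA] at hq
    refine ⟨⊤, ⟨d, trivial, hd0⟩, nSteps_top.trans_le n.zero_le, ?_⟩
    rw [localClosure_primeCompl_eq_top hq, top_unique (le_localClosure _ _)]

/-- By (S₂) it suffices to compare localizations at primes `q` of height at most one. There `L_P`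
is either the unit ideal or, as `J` has height at least one, equal to `J`. -/
theorem nSteps_LP_le (hA : IsClosed (singLocus A)) (hS2 : SerreS2 A) (P : PrimeSpectrum A) :
    nSteps A (LP A P) ≤ nSteps A (singIdeal A) := by
  obtain ⟨d, hd, hd0⟩ := exists_mem_singIdeal_mem_nonZeroDivisors hA
  refine nSteps_le_of_forall_localClosure_eq hS2.iInf_localClosure_bot_le
    ⟨d, singIdeal_le_LP P hd, hd0⟩ fun ⟨q, hheight⟩ ↦ ?_
  by_cases hq : LP A P ≤ q.asIdeal
  · refine ⟨singIdeal A, ⟨d, hd, hd0⟩, le_rfl, (localClosure_singIdeal_eq_LP hA ?_).symm⟩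
    have eq_q {p} (hp : p ∈ (singIdeal A).minimalPrimes) (hpq : p ≤ q.asIdeal) :
        p = q.asIdeal :=
      have : p.IsPrime := hp.isPrime
      eq_of_le_of_height_le_one
        (fun hmin ↦ not_singIdeal_le_of_mem_minimalPrimes hA hmin hp.1.2) hpq hheight
    obtain ⟨p₀, hp₀, hp₀P, hp₀q⟩ := exists_mem_minimalPrimes_singIdeal_of_LP_le hA hq
    intro p hp hpq
    rwa [eq_q hp hpq, ← eq_q hp₀ hp₀q]
  · refine ⟨⊤, ⟨d, trivial, hd0⟩, nSteps_top.trans_le (Nat.zero_le _), ?_⟩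
    rw [localClosure_primeCompl_eq_top hq, top_unique (le_localClosure _ _)]

end Strata

theorem nSteps_singIdeal_le_sup_strata_general (A : Type*) [CommRing A] [IsReduced A]
    [IsNoetherianRing A] [Module.Finite A (integralClosure A (FractionRing A))]
    (hA : IsClosed (singLocus A)) (hsing : (singLocus A).Nonempty) :
    nSteps A (singIdeal A) ≤ sSup {m : ℕ | ∃ P ∈ singLocus A, m = nSteps A (LP A P)} ∧
      (SerreS2 A →
        nSteps A (singIdeal A) = sSup {m : ℕ | ∃ P ∈ singLocus A, m = nSteps A (LP A P)}) := by
  have hle : nSteps A (singIdeal A) ≤ sSup {m : ℕ | ∃ P ∈ singLocus A, m = nSteps A (LP A P)} :=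
    nSteps_singIdeal_le hA fun P hP ↦ le_csSup (finite_setOf_nSteps_LP hA).bddAbove ⟨P, hP, rfl⟩
  refine ⟨hle, fun hS2 ↦ hle.antisymm (csSup_le ?_ ?_)⟩
  · obtain ⟨P, hP⟩ := hsing
    exact ⟨_, P, hP, rfl⟩
  · rintro _ ⟨P, -, rfl⟩
    exact nSteps_LP_le hA hS2 P

/-- Let `K` be a field and `A` a reduced finitely generated
`K`-algebra which is not regular, and let `J` be the vanishing ideal of the singular
locus. Then `n(A, J) ≤ max_W n(A, L_W)`, the maximum running over the (finitely
many) strata `W` of `Sing(A)`; if moreover `A` is equidimensional and satisfies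
`(S₂)`, then equality holds. Since `L_W = L_P` for any `P` in the stratum `W`, the
maximum over strata is the supremum of `n(A, L_P)` for `P ∈ Sing(A)`. -/
theorem nSteps_singIdeal_le_sup_strata
    (K : Type*) [Field K] (A : Type*) [CommRing A] [IsReduced A] [Algebra K A]
    [Algebra.FiniteType K A] (hsing : (singLocus A).Nonempty) :
    nSteps A (singIdeal A) ≤ sSup {m : ℕ | ∃ P ∈ singLocus A, m = nSteps A (LP A P)} ∧
      (Equidimensional A → SerreS2 A →
        nSteps A (singIdeal A)
          = sSup {m : ℕ | ∃ P ∈ singLocus A, m = nSteps A (LP A P)}) := by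
  have : IsNoetherianRing A := Algebra.FiniteType.isNoetherianRing K A
  have : Module.Finite A (integralClosure A (FractionRing A)) :=
    finite_integralClosure_fractionRing K A
  have h := nSteps_singIdeal_le_sup_strata_general A (isClosed_singLocus K A) hsing
  exact ⟨h.1, fun _ ↦ h.2⟩
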